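/- arXiv:1712.05212 — 3 statements merged into one kernel-verified Lean document; each statement's English description precedes it below -/
import Mathlib

section
/- There exist a topological embedding h of the Baire space ℕ → ℕ into ℝ whose range is exactly the set of irrational numbers, and a dense Gδ set G ⊆ ℝ, such that: for every Miller tree T there is a Miller tree T' ⊆ T with the algebraic sum G + h([T']) = {g + y : g ∈ G, y ∈ h([T'])} of Lebesgue measure zero; for every Laver tree T there is a Laver tree T' ⊆ T with G + h([T']) of Lebesgue measure zero; and for every complete Laver tree T there is a complete Laver tree T' ⊆ T with G + h([T']) of Lebesgue measure zero. -/
open Cardinal Set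

/-- A tree on ω: a nonempty set of finite sequences closed under initial segments. -/
def IsTree (T : Set (List ℕ)) : Prop :=
  T.Nonempty ∧ ∀ s ∈ T, ∀ n : ℕ, s.take n ∈ T

/-- The body of a tree: all infinite branches. -/
def treeBody (T : Set (List ℕ)) : Set (ℕ → ℕ) :=
  {x | ∀ n : ℕ, (List.ofFn fun i : Fin n => x i) ∈ T}

/-- Immediate successors of a node in a tree. -/
def succs (T : Set (List ℕ)) (t : List ℕ) : Set ℕ := {n | t ++ [n] ∈ T}

/-- Sacks (perfect) tree: every node has an extension with at least two immediate successors. -/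
def IsSacksTree (T : Set (List ℕ)) : Prop :=
  IsTree T ∧ ∀ s ∈ T, ∃ t ∈ T, s <+: t ∧ (succs T t).Nontrivial

/-- Miller tree: every node has an extension with infinitely many immediate successors. -/
def IsMillerTree (T : Set (List ℕ)) : Prop :=
  IsTree T ∧ ∀ s ∈ T, ∃ t ∈ T, s <+: t ∧ (succs T t).Infinite

/-- Laver tree: has a stem (a node comparable with every node) such that every node
extending the stem has infinitely many immediate successors. -/
def IsLaverTree (T : Set (List ℕ)) : Prop :=
  IsTree T ∧ ∃ s ∈ T, (∀ t ∈ T, s <+: t ∨ t <+: s) ∧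
    ∀ t ∈ T, s <+: t → (succs T t).Infinite

/-- Complete Laver tree: every node has infinitely many immediate successors. -/
def IsCompleteLaverTree (T : Set (List ℕ)) : Prop :=
  IsTree T ∧ ∀ t ∈ T, (succs T t).Infinite

/-- The tree ideal t₀ associated with a family of trees 𝕋. -/
def treeIdeal (𝕋 : Set (Set (List ℕ))) : Set (Set (ℕ → ℕ)) :=
  {A | ∀ P ∈ 𝕋, ∃ Q ∈ 𝕋, Q ⊆ P ∧ treeBody Q ∩ A = ∅}

/-- t-measurability with respect to a family of trees 𝕋. -/
def TMeasurable (𝕋 : Set (Set (List ℕ))) (A : Set (ℕ → ℕ)) : Prop :=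
  ∀ P ∈ 𝕋, ∃ Q ∈ 𝕋, Q ⊆ P ∧ (treeBody Q ⊆ A ∨ treeBody Q ∩ A = ∅)

/-- 𝕋-Bernstein set: meets and omits the body of every tree in 𝕋. -/
def TBernstein (𝕋 : Set (Set (List ℕ))) (B : Set (ℕ → ℕ)) : Prop :=
  ∀ T ∈ 𝕋, (B ∩ treeBody T).Nonempty ∧ (B \ treeBody T).Nonempty


namespace S14

def sh (x : ℕ → ℕ) : ℕ → ℕ := fun n => x (n+1)

noncomputable def f (n : ℕ) (a : ℝ) : ℝ := 1 / ((n:ℝ) + 1 + a)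

noncomputable def u : ℕ → (ℕ → ℕ) → ℝ
  | 0, _ => 0
  | k+1, x => f (x 0) (u k (sh x))

lemma f01 (n : ℕ) {a : ℝ} (ha : 0 ≤ a) : 0 < f n a ∧ f n a ≤ 1 := by
  have hn : (0:ℝ) ≤ n := Nat.cast_nonneg n
  constructor
  · unfold f; positivity
  · unfold f; rw [div_le_one (by positivity)]; linarith

lemma f_lip (n : ℕ) {a b : ℝ} (ha : 0 ≤ a) (hb : 0 ≤ b) : |f n a - f n b| ≤ |a - b| := by
  have hn : (0:ℝ) ≤ n := Nat.cast_nonneg n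
  have e : f n a - f n b = (b - a) / ((n + 1 + a) * (n + 1 + b)) := by
    unfold f; field_simp; ring
  rw [e, abs_div, abs_sub_comm, abs_of_pos (show 0 < ((n:ℝ) + 1 + a) * (n + 1 + b) by positivity)]
  apply div_le_self (abs_nonneg _)
  nlinarith [mul_nonneg ha hb, mul_nonneg hn ha, mul_nonneg hn hb]

lemma f_contr (n m : ℕ) {a b : ℝ} (ha : 0 ≤ a) (hb : 0 ≤ b) :
    |f n (f m a) - f n (f m b)| ≤ |a - b| / 4 := by
  have hn : (0:ℝ) ≤ n := Nat.cast_nonneg n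
  have hm : (0:ℝ) ≤ m := Nat.cast_nonneg m
  have e : f n (f m a) - f n (f m b) =
      (a - b) / (((n + 1) * (m + 1 + a) + 1) * ((n + 1) * (m + 1 + b) + 1)) := by
    unfold f; field_simp; ring
  have h1 : ∀ c : ℝ, 0 ≤ c → 2 ≤ ((n:ℝ) + 1) * (m + 1 + c) + 1 := fun c hc => by
    nlinarith [mul_nonneg hn hm, mul_nonneg hn hc]
  have ha' := h1 a ha
  have hb' := h1 b hb
  rw [e, abs_div, abs_of_pos (show 0 < (((n:ℝ) + 1) * (m + 1 + a) + 1) * ((n + 1) * (m + 1 + b) + 1) by positivity)]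
  apply div_le_div_of_nonneg_left (abs_nonneg _) (by norm_num)
  nlinarith

lemma u01 (k : ℕ) (x : ℕ → ℕ) : 0 ≤ u k x ∧ u k x ≤ 1 := by
  induction k generalizing x with
  | zero => simp [u]
  | succ k ih => exact ⟨(f01 _ (ih _).1).1.le, (f01 _ (ih _).1).2⟩

lemma u_close (k : ℕ) : ∀ (i j : ℕ) (x : ℕ → ℕ),
    |u (2*k+i) x - u (2*k+j) x| ≤ (1/4:ℝ)^k := by
  induction k with
  | zero =>
    intro i j x
    have h1 := u01 (2*0+i) x
    have h2 := u01 (2*0+j) x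
    rw [abs_le]; constructor <;> simp only [pow_zero] <;> linarith
  | succ k ih =>
    intro i j x
    have e : ∀ i, u (2*(k+1)+i) x = f (x 0) (f (x 1) (u (2*k+i) (sh (sh x)))) := by
      intro i
      rw [show 2*(k+1)+i = (2*k+i)+1+1 by ring]; rfl
    rw [e, e]
    refine (f_contr _ _ (u01 _ _).1 (u01 _ _).1).trans ?_
    rw [pow_succ]
    have := ih i j (sh (sh x))
    linarith

open Filter Topology in
lemma exists_g : ∃ g : (ℕ → ℕ) → ℝ, (∀ x, g x = f (x 0) (g (sh x))) ∧ ∀ x, 0 < g x ∧ g x < 1 := by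
  have hc : ∀ x, ∃ l, Tendsto (fun k => u k x) atTop (𝓝 l) := by
    intro x
    apply cauchySeq_tendsto_of_complete
    rw [Metric.cauchySeq_iff']
    intro ε hε
    obtain ⟨k, hk⟩ := exists_pow_lt_of_lt_one hε (show (1/4:ℝ) < 1 by norm_num)
    refine ⟨2*k, fun n hn => ?_⟩
    obtain ⟨i, rfl⟩ := Nat.exists_eq_add_of_le hn
    rw [Real.dist_eq]
    exact (u_close k i 0 x).trans_lt hk
  choose g hg using hc
  have g0 : ∀ x, 0 ≤ g x := fun x => ge_of_tendsto' (hg x) (fun k => (u01 k x).1)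
  have ge : ∀ x, g x = f (x 0) (g (sh x)) := by
    intro x
    refine tendsto_nhds_unique ((tendsto_add_atTop_iff_nat 1).2 (hg x)) ?_
    have : Tendsto (fun k => 1 / (((x 0 : ℕ):ℝ) + 1 + u k (sh x))) atTop
        (𝓝 (1 / (((x 0 : ℕ):ℝ) + 1 + g (sh x)))) := by
      apply Tendsto.div tendsto_const_nhds (tendsto_const_nhds.add (hg _))
      have := g0 (sh x)
      positivity
    exact this
  have gp : ∀ x, 0 < g x := fun x => by rw [ge]; exact (f01 _ (g0 _)).1
  refine ⟨g, ge, fun x => ⟨gp x, ?_⟩⟩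
  rw [ge, f, div_lt_one]
  · have := gp (sh x); have : (0:ℝ) ≤ (x 0 : ℕ) := Nat.cast_nonneg _; linarith
  · have := gp (sh x); positivity

def GG (g : (ℕ → ℕ) → ℝ) : Prop :=
  (∀ x, g x = f (x 0) (g (sh x))) ∧ ∀ x, 0 < g x ∧ g x < 1

lemma g_inv {g} (H : GG g) (x : ℕ → ℕ) : (g x)⁻¹ = (x 0 : ℕ) + 1 + g (sh x) := by
  rw [H.1 x, f]; simp

lemma g_rat {g} (H : GG g) : ∀ (q : ℕ) (p : ℕ) (x : ℕ → ℕ), g x * q = p → q = 0 := by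
  intro q
  induction q using Nat.strong_induction_on with
  | _ q ih =>
    intro p x hx
    by_contra hq
    have hq' : (0:ℝ) < q := by exact_mod_cast Nat.pos_of_ne_zero hq
    obtain ⟨g0, g1⟩ := H.2 x
    have hpq : p < q := by
      have : (p:ℝ) < q := by rw [← hx]; nlinarith
      exact_mod_cast this
    have hp : (0:ℝ) < p := by rw [← hx]; positivity
    have hi := g_inv H x
    have hqp : (q:ℝ) = ((x 0 : ℕ) + 1 + g (sh x)) * p := by
      rw [← hi, ← hx]; field_simp
    have hpos := (H.2 (sh x)).1
    have hle : (x 0 + 1) * p ≤ q := by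
      have : ((x 0 : ℕ) + 1) * (p:ℝ) ≤ q := by nlinarith
      exact_mod_cast this
    have := ih p hpq (q - (x 0 + 1) * p) (sh x) (by
      push_cast [Nat.cast_sub hle]; linarith)
    subst this
    simp at hp

lemma g_irr {g} (H : GG g) (x : ℕ → ℕ) : Irrational (g x) := by
  rintro ⟨r, hr⟩
  have h0 : 0 < r := by
    have := (H.2 x).1; rw [← hr] at this; exact_mod_cast this
  have hn : (r.num.toNat : ℤ) = r.num := Int.toNat_of_nonneg (Rat.num_pos.2 h0).le
  have := g_rat H r.den r.num.toNat x (by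
    rw [← hr]
    have h1 : r * r.den = r.num := Rat.mul_den_eq_num r
    have h2 : ((r.num.toNat : ℕ) : ℝ) = ((r.num : ℤ) : ℝ) := by exact_mod_cast hn
    rw [h2]; exact_mod_cast h1)
  exact r.den_ne_zero this

lemma g_agree {g} (H : GG g) (k : ℕ) : ∀ (x y : ℕ → ℕ), (∀ l < 2*k, x l = y l) →
    |g x - g y| ≤ (1/4:ℝ)^k := by
  induction k with
  | zero =>
    intro x y _
    have := H.2 x
    have := H.2 y
    rw [abs_le]; constructor <;> simp only [pow_zero] <;> linarith
  | succ k ih =>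
    intro x y hxy
    rw [H.1 x, H.1 (sh x), H.1 y, H.1 (sh y), show sh x 0 = sh y 0 from hxy 1 (by omega), hxy 0 (by omega)]
    refine (f_contr _ _ (H.2 _).1.le (H.2 _).1.le).trans ?_
    have := ih (sh (sh x)) (sh (sh y)) (fun l hl => hxy (l+1+1) (by omega))
    rw [pow_succ]; linarith

open Filter Topology in
lemma g_cont {g} (H : GG g) : Continuous g := by
  rw [continuous_iff_continuousAt]
  intro x
  unfold ContinuousAt
  rw [Metric.tendsto_nhds]
  intro ε hε
  obtain ⟨k, hk⟩ := exists_pow_lt_of_lt_one hε (show (1/4:ℝ) < 1 by norm_num)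
  have h1 : ∀ᶠ y in 𝓝 x, ∀ l ∈ Finset.range (2*k), y l = x l := by
    rw [Filter.eventually_all_finset]
    intro l _
    have := (continuous_apply (A := fun _ : ℕ => ℕ) l).continuousAt (x := x)
    exact this.eventually (p := fun m => m = x l) (by simp [nhds_discrete])
  filter_upwards [h1] with y hy
  rw [Real.dist_eq]
  exact (g_agree H k y x (fun l hl => hy l (by simpa using hl))).trans_lt hk

noncomputable def Ga (y : ℝ) : ℝ := Int.fract y⁻¹
noncomputable def dg (y : ℝ) : ℕ → ℕ := fun n => ⌊(Ga^[n] y)⁻¹⌋₊ - 1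

lemma fract_irr {y : ℝ} (h : Irrational y) : Irrational (Int.fract y) ∧ 0 < Int.fract y ∧ Int.fract y < 1 := by
  have h1 : Irrational (Int.fract y) := by
    rw [Int.fract]; exact h.sub_intCast _
  refine ⟨h1, lt_of_le_of_ne (Int.fract_nonneg _) (Ne.symm h1.ne_zero), Int.fract_lt_one _⟩

lemma Ga_irr {y : ℝ} (h : Irrational y) : Irrational (Ga y) ∧ 0 < Ga y ∧ Ga y < 1 :=
  fract_irr h.inv

lemma dg_sh (y : ℝ) : sh (dg y) = dg (Ga y) := by
  funext n; rfl

lemma Ga_f {y : ℝ} (h0 : 0 < y) (h1 : y < 1) : y = f (dg y 0) (Ga y) := by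
  have h2 : 1 ≤ y⁻¹ := (one_le_inv₀ h0).2 h1.le
  have h3 : 1 ≤ ⌊y⁻¹⌋₊ := Nat.le_floor (by simpa using h2)
  have h4 : ((⌊y⁻¹⌋₊ : ℕ) : ℝ) = ((⌊y⁻¹⌋ : ℤ) : ℝ) := natCast_floor_eq_intCast_floor (by positivity)
  have h5 : ((dg y 0 : ℕ) : ℝ) + 1 = (⌊y⁻¹⌋ : ℤ) := by
    rw [← h4]; simp only [dg, Function.iterate_zero, id]; push_cast [Nat.cast_sub h3]; ring
  rw [f, h5, Ga, Int.floor_add_fract]; simp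

lemma g_surj {g} (H : GG g) {y : ℝ} (hy : Irrational y) (h0 : 0 < y) (h1 : y < 1) : g (dg y) = y := by
  have key : ∀ k : ℕ, ∀ y : ℝ, Irrational y → 0 < y → y < 1 → |g (dg y) - y| ≤ (1/4:ℝ)^k := by
    intro k
    induction k with
    | zero =>
      intro y hy h0 h1
      have := H.2 (dg y)
      rw [abs_le]; constructor <;> simp only [pow_zero] <;> linarith
    | succ k ih =>
      intro y hy h0 h1
      obtain ⟨a, b, c⟩ := Ga_irr hy
      obtain ⟨a', b', c'⟩ := Ga_irr a
      have e1 : y = f (dg y 0) (f (dg (Ga y) 0) (Ga (Ga y))) := by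
        rw [← Ga_f b c, ← Ga_f h0 h1]
      have e2 : g (dg y) = f (dg y 0) (f (dg (Ga y) 0) (g (dg (Ga (Ga y))))) := by
        rw [H.1, dg_sh, H.1 (dg (Ga y)), dg_sh]
      calc |g (dg y) - y| = |f (dg y 0) (f (dg (Ga y) 0) (g (dg (Ga (Ga y))))) -
            f (dg y 0) (f (dg (Ga y) 0) (Ga (Ga y)))| := by rw [← e2, ← e1]
        _ ≤ _ := f_contr _ _ (H.2 _).1.le b'.le
        _ ≤ _ := by
          have := ih _ a' b' c'
          rw [pow_succ]; linarith
  by_contra hne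
  have : 0 < |g (dg y) - y| := abs_pos.2 (sub_ne_zero.2 hne)
  obtain ⟨k, hk⟩ := exists_pow_lt_of_lt_one this (show (1/4:ℝ) < 1 by norm_num)
  exact absurd (key k y hy h0 h1) (not_le.2 hk)

lemma g_digit {g} (H : GG g) (x : ℕ → ℕ) (n : ℕ) (h1 : (n:ℝ) + 1 < (g x)⁻¹) (h2 : (g x)⁻¹ < n + 2) :
    x 0 = n := by
  rw [g_inv H] at h1 h2
  have := H.2 (sh x)
  have a : n < x 0 + 1 := by
    have : (n:ℝ) < (x 0 : ℕ) + 1 := by linarith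
    exact_mod_cast this
  have b : x 0 < n + 1 := by
    have : ((x 0 : ℕ) : ℝ) < n + 1 := by linarith
    exact_mod_cast this
  omega

open Filter Topology in
lemma g_conv {g} (H : GG g) {α : Type} (l : Filter α) (n : ℕ) : ∀ (x : ℕ → ℕ) (φ : α → ℕ → ℕ),
    Tendsto (fun y => g (φ y)) l (𝓝 (g x)) → ∀ᶠ y in l, φ y n = x n := by
  have base : ∀ (x : ℕ → ℕ) (φ : α → ℕ → ℕ),
      Tendsto (fun y => g (φ y)) l (𝓝 (g x)) → ∀ᶠ y in l, φ y 0 = x 0 := by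
    intro x φ ht
    have hi : Tendsto (fun y => (g (φ y))⁻¹) l (𝓝 ((g x)⁻¹)) := ht.inv₀ (H.2 x).1.ne'
    have := H.2 (sh x)
    filter_upwards [hi.eventually_const_lt (show ((x 0 : ℕ):ℝ) + 1 < (g x)⁻¹ by rw [g_inv H]; linarith),
      hi.eventually_lt_const (show (g x)⁻¹ < ((x 0 : ℕ):ℝ) + 2 by rw [g_inv H]; linarith)] with y h1 h2
    exact g_digit H _ _ h1 h2
  induction n with
  | zero => exact base
  | succ n ih =>
    intro x φ ht
    have hi : Tendsto (fun y => (g (φ y))⁻¹) l (𝓝 ((g x)⁻¹)) := ht.inv₀ (H.2 x).1.ne'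
    refine ih (sh x) (fun y => sh (φ y)) ?_
    have h2 : Tendsto (fun y => (g (φ y))⁻¹ - ((x 0 : ℕ) + 1)) l (𝓝 ((g x)⁻¹ - ((x 0 : ℕ) + 1))) :=
      hi.sub_const _
    rw [g_inv H x, add_sub_cancel_left] at h2
    refine h2.congr' ?_
    filter_upwards [base x φ ht] with y hy
    rw [g_inv H, hy, add_sub_cancel_left]

def Ext : List ℕ → (ℕ → ℕ) → Prop
  | [], _ => True
  | a :: s, x => x 0 = a ∧ Ext s (sh x)

lemma ext_of_prefix : ∀ (t : List ℕ) (x : ℕ → ℕ) (L : ℕ), t <+: (List.ofFn fun i : Fin L => x i) → Ext t x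
  | [], _, _, _ => trivial
  | a :: t, x, 0, h => by simp at h
  | a :: t, x, L+1, h => by
    rw [List.ofFn_succ, List.cons_prefix_cons] at h
    exact ⟨h.1.symm, ext_of_prefix t (sh x) L (by simpa [sh] using h.2)⟩

lemma g_node {g} (H : GG g) (s : List ℕ) : ∃ q : ℝ, 0 ≤ q ∧ ∀ (n : ℕ) (x : ℕ → ℕ), Ext (s ++ [n]) x →
    |g x - q| ≤ 1 / ((n:ℝ) + 1) := by
  induction s with
  | nil =>
    refine ⟨0, le_rfl, fun n x hx => ?_⟩
    obtain ⟨h, -⟩ := hx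
    have := (H.2 (sh x)).1
    rw [sub_zero, abs_of_pos (H.2 x).1, H.1, f, h]
    apply one_div_le_one_div_of_le (by positivity); linarith
  | cons a s ih =>
    obtain ⟨q, q0, hq⟩ := ih
    refine ⟨f a q, (f01 _ q0).1.le, fun n x hx => ?_⟩
    obtain ⟨h, h'⟩ := hx
    rw [H.1, h]
    exact (f_lip _ (H.2 _).1.le q0).trans (hq n _ h')

def HH (h : (ℕ → ℕ) → ℝ) : Prop := ∀ s : List ℕ, s ≠ [] → ∃ q : ℝ, ∀ (n : ℕ) (x : ℕ → ℕ), Ext (s ++ [n]) x →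
    |h x - q| ≤ 1 / ((n:ℝ) + 1)

open Filter Topology in
lemma exists_h : ∃ h : (ℕ → ℕ) → ℝ, Topology.IsEmbedding h ∧ Set.range h = {x : ℝ | Irrational x} ∧ HH h := by
  obtain ⟨g, H⟩ := exists_g
  change GG g at H
  let ι : ℕ ≃ ℤ := Equiv.intEquivNat.symm
  let h : (ℕ → ℕ) → ℝ := fun x => (ι (x 0) : ℝ) + g (sh x)
  have hfl : ∀ x, ⌊h x⌋ = ι (x 0) := by
    intro x
    rw [Int.floor_eq_iff]
    have := H.2 (sh x)
    simp only [h]; constructor <;> linarith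
  have hcont : Continuous h := by
    have h1 : Continuous fun x : ℕ → ℕ => (ι (x 0) : ℝ) :=
      (continuous_of_discreteTopology (f := fun n : ℕ => (ι n : ℝ))).comp (continuous_apply 0)
    have h2 : Continuous sh := continuous_pi fun n => continuous_apply (n+1)
    exact h1.add ((g_cont H).comp h2)
  have hconv : ∀ x, comap h (𝓝 (h x)) ≤ 𝓝 x := by
    intro x
    have ht : Tendsto h (comap h (𝓝 (h x))) (𝓝 (h x)) := tendsto_comap
    have h0 : ∀ᶠ y in comap h (𝓝 (h x)), y 0 = x 0 := by
      have := H.2 (sh x)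
      filter_upwards [ht.eventually_const_lt (show (ι (x 0) : ℝ) < h x by simp only [h]; linarith),
        ht.eventually_lt_const (show h x < (ι (x 0) : ℝ) + 1 by simp only [h]; linarith)] with y h1 h2
      have : ⌊h y⌋ = ι (x 0) := Int.floor_eq_iff.2 ⟨h1.le, h2⟩
      rw [hfl] at this
      exact ι.injective this
    have h1 : Tendsto (fun y => g (sh y)) (comap h (𝓝 (h x))) (𝓝 (g (sh x))) := by
      have h2 := ht.sub_const (ι (x 0) : ℝ)
      have e : ∀ y, h y - (ι (y 0) : ℝ) = g (sh y) := fun y => by simp only [h]; ring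
      rw [e] at h2
      refine h2.congr' ?_
      filter_upwards [h0] with y hy
      rw [← hy, e]
    rw [nhds_pi, Filter.le_pi]
    intro i
    rw [nhds_discrete ℕ, tendsto_pure]
    cases i with
    | zero => exact h0
    | succ n => exact g_conv H _ n (sh x) sh h1
  refine ⟨h, ⟨?_, ?_⟩, ?_, ?_⟩
  · rw [isInducing_iff_nhds]
    exact fun x => le_antisymm (hcont.tendsto x).le_comap (hconv x)
  · intro x y hxy
    have : ∀ᶠ z in pure x, z ∈ ({z | z = y} : Set (ℕ → ℕ)) := by
      have h3 : pure x ≤ 𝓝 y := by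
        refine le_trans ?_ (hconv y)
        rw [← hxy]
        exact le_trans (pure_le_nhds x) (hcont.tendsto x).le_comap
      have h4 := (pure_le_nhds_iff).1 h3
      exact h4
    simpa using this
  · ext y
    constructor
    · rintro ⟨x, rfl⟩
      exact (g_irr H (sh x)).intCast_add _
    · intro hy
      obtain ⟨a, b, c⟩ := fract_irr hy
      refine ⟨fun n => Nat.casesOn n (ι.symm ⌊y⌋) (dg (Int.fract y)), ?_⟩
      have : sh (fun n => Nat.casesOn n (ι.symm ⌊y⌋) (dg (Int.fract y))) = dg (Int.fract y) := rfl
      simp only [h, this, g_surj H a b c]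
      simp
  · intro s hs
    cases s with
    | nil => exact absurd rfl hs
    | cons a s =>
      obtain ⟨q, -, hq⟩ := g_node H s
      refine ⟨(ι a : ℝ) + q, fun n x hx => ?_⟩
      obtain ⟨h1, h2⟩ := hx
      simp only [h, h1, add_sub_add_left_eq_sub]
      exact hq n _ h2

noncomputable def fus (t0 : List ℕ) (F : ℕ → List ℕ → List ℕ) : ℕ → List ℕ
  | 0 => t0
  | m+1 => F m (fus t0 F (Nat.unpair m).1)
termination_by m => m
decreasing_by exact Nat.lt_succ_of_le (Nat.unpair_left_le m)

def GS : Set ℝ := ⋂ k : ℕ, ⋃ j : ℕ, Metric.ball (TopologicalSpace.denseSeq ℝ j) ((1/8:ℝ)^(j+k))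

lemma GS_dense : Dense GS := by
  apply (TopologicalSpace.denseRange_denseSeq ℝ).mono
  rintro _ ⟨j, rfl⟩
  refine Set.mem_iInter.2 fun k => Set.mem_iUnion.2 ⟨j, Metric.mem_ball_self (by positivity)⟩

lemma GS_Gδ : IsGδ GS :=
  IsGδ.iInter_of_isOpen fun _ => isOpen_iUnion fun _ => Metric.isOpen_ball

open MeasureTheory Pointwise Filter Topology in
lemma null_of_cover (Y : Set ℝ) (q : ℕ → ℝ)
    (hY : ∀ m : ℕ, ∀ y ∈ Y, ∃ i ≤ m, |y - q i| ≤ (1/8:ℝ)^m) : volume (GS + Y) = 0 := by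
  set F : ℕ → ENNReal := fun m => ENNReal.ofReal (4 * (1/4:ℝ)^m) with hF
  have hs : ∑' m, F m ≠ ⊤ :=
    ((summable_geometric_of_lt_one (by norm_num) (by norm_num)).mul_left 4).tsum_ofReal_ne_top
  have ht := ENNReal.tendsto_sum_nat_add F hs
  refine le_antisymm (ge_of_tendsto' ht fun k => ?_) bot_le
  have hsub : GS + Y ⊆ ⋃ j : ℕ, ⋃ i ∈ Finset.range (j+k+1),
      Metric.closedBall (TopologicalSpace.denseSeq ℝ j + q i) (2 * (1/8:ℝ)^(j+k)) := by
    rintro _ ⟨a, ha, y, hy, rfl⟩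
    obtain ⟨j, hj⟩ := Set.mem_iUnion.1 (Set.mem_iInter.1 ha k)
    obtain ⟨i, hi, hq⟩ := hY (j+k) y hy
    refine Set.mem_iUnion.2 ⟨j, Set.mem_iUnion₂.2 ⟨i, by simp; omega, ?_⟩⟩
    rw [Metric.mem_ball, Real.dist_eq] at hj
    rw [Metric.mem_closedBall, Real.dist_eq]
    calc _ = |(a - TopologicalSpace.denseSeq ℝ j) + (y - q i)| := by congr 1; simp only []; ring
      _ ≤ _ := abs_add_le _ _
      _ ≤ _ := by linarith
  refine (measure_mono hsub).trans ((measure_iUnion_le _).trans (ENNReal.tsum_le_tsum fun j => ?_))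
  refine (measure_biUnion_finset_le _ _).trans ?_
  simp only [Real.volume_closedBall, Finset.sum_const, Finset.card_range, nsmul_eq_mul]
  rw [hF, ← ENNReal.ofReal_natCast, ← ENNReal.ofReal_mul (by positivity)]
  apply ENNReal.ofReal_le_ofReal
  have h2 : ((j+k+1 : ℕ):ℝ) ≤ 2^(j+k) := by exact_mod_cast (Nat.lt_two_pow_self (n := j+k))
  have e : (2:ℝ)^(j+k) * (1/8)^(j+k) = (1/4)^(j+k) := by rw [← mul_pow]; norm_num
  calc ((j+k+1 : ℕ):ℝ) * (2 * (2 * (1/8)^(j+k))) ≤ 2^(j+k) * (2 * (2 * (1/8)^(j+k))) := by gcongr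
    _ = 4 * (1/4)^(j+k) := by rw [← e]; ring

open MeasureTheory Pointwise in
lemma fusion {h} (H : HH h) (N : Set (List ℕ)) (hne : ∀ t ∈ N, t ≠ []) (A : List ℕ → Set ℕ)
    (hA : ∀ t ∈ N, (A t).Infinite) (e : List ℕ → ℕ → List ℕ)
    (he : ∀ t ∈ N, ∀ n ∈ A t, e t n ∈ N ∧ t ++ [n] <+: e t n) (t0 : List ℕ) (ht0 : t0 ∈ N) :
    ∃ t : ℕ → List ℕ, t 0 = t0 ∧ (∀ j, t j ∈ N) ∧
      (∀ j, ∃ i ≤ j, ∃ n ∈ A (t i), t (j+1) = e (t i) n) ∧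
      (∀ i, {n | n ∈ A (t i) ∧ ∃ j, t j = e (t i) n}.Infinite) ∧
      volume (GS + h '' treeBody {u | ∃ j, u <+: t j}) = 0 := by
  have hc : ∀ (s : List ℕ) (m : ℕ), ∃ n, s ∈ N → n ∈ A s ∧ 8^m < n := by
    intro s m
    by_cases hs : s ∈ N
    · obtain ⟨n, hn, hm⟩ := (hA s hs).exists_gt (8^m)
      exact ⟨n, fun _ => ⟨hn, hm⟩⟩
    · exact ⟨0, fun h => absurd h hs⟩
  choose c hc using hc
  let t := fus t0 (fun m s => e s (c s m))
  have t_zero : t 0 = t0 := by simp only [t]; rw [fus]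
  have t_succ : ∀ m, t (m+1) = e (t (Nat.unpair m).1) (c (t (Nat.unpair m).1) m) := by
    intro m; simp only [t]; rw [fus]
  have tN : ∀ j, t j ∈ N := by
    intro j
    induction j using Nat.strong_induction_on with
    | _ j ih =>
      cases j with
      | zero => rw [t_zero]; exact ht0
      | succ m =>
        rw [t_succ]
        have := ih (Nat.unpair m).1 (Nat.lt_succ_of_le (Nat.unpair_left_le m))
        exact (he _ this _ (hc _ m this).1).1
  choose q hq using fun i => H (t i) (hne _ (tN i))
  refine ⟨t, t_zero, tN, fun j => ⟨_, Nat.unpair_left_le j, _, (hc _ j (tN _)).1, t_succ j⟩, fun i => ?_, ?_⟩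
  · apply Set.infinite_of_forall_exists_gt
    intro k
    refine ⟨c (t i) (Nat.pair i k), ⟨(hc _ _ (tN i)).1, Nat.pair i k + 1, ?_⟩, ?_⟩
    · rw [t_succ]; simp
    · have h1 := (hc _ (Nat.pair i k) (tN i)).2
      have h2 := Nat.right_le_pair i k
      have h3 : Nat.pair i k < 8 ^ Nat.pair i k := Nat.lt_pow_self (by norm_num)
      omega
  · apply null_of_cover _ q
    rintro m _ ⟨x, hx, rfl⟩
    have key : ∀ j, m < j → ∃ i ≤ m, ∃ l, m ≤ l ∧ t i ++ [c (t i) l] <+: t j := by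
      intro j
      induction j using Nat.strong_induction_on with
      | _ j ih =>
        intro hj
        obtain ⟨p, rfl⟩ : ∃ p, j = p + 1 := ⟨j - 1, by omega⟩
        have hp := Nat.unpair_left_le p
        have hpre := (he _ (tN _) _ (hc _ p (tN (Nat.unpair p).1)).1).2
        rw [← t_succ] at hpre
        by_cases hb : (Nat.unpair p).1 ≤ m
        · exact ⟨_, hb, p, by omega, hpre⟩
        · obtain ⟨i, hi, l, hl, hil⟩ := ih _ (Nat.lt_succ_of_le hp) (by omega)
          exact ⟨i, hi, l, hl, hil.trans ((List.prefix_append _ _).trans hpre)⟩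
    let L := ∑ i ∈ Finset.range (m+1), (t i).length + 1
    have hL : ∀ i ≤ m, (t i).length + 1 ≤ L := by
      intro i hi
      have := Finset.single_le_sum (f := fun i => (t i).length) (fun _ _ => Nat.zero_le _)
        (Finset.mem_range.2 (Nat.lt_succ_of_le hi))
      simp only [L]
      simpa using this
    obtain ⟨j, hj⟩ := hx L
    have hmj : m < j := by
      by_contra hcon
      have h1 := hL j (by omega)
      have h2 := hj.length_le
      simp at h2
      omega
    obtain ⟨i, hi, l, hl, hil⟩ := key j hmj
    have hpre : t i ++ [c (t i) l] <+: List.ofFn fun i : Fin L => x i :=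
      List.prefix_of_prefix_length_le hil hj (by simp only [List.length_append, List.length_singleton, List.length_ofFn]; exact hL i hi)
    refine ⟨i, hi, (hq i _ x (ext_of_prefix _ _ _ hpre)).trans ?_⟩
    have h1 := (hc _ l (tN i)).2
    have h2 : (8:ℝ)^l < c (t i) l := by exact_mod_cast h1
    have h3 : (8:ℝ)^m ≤ 8^l := pow_le_pow_right₀ (by norm_num) hl
    rw [div_pow, one_pow]
    apply one_div_le_one_div_of_le (by positivity)
    linarith

lemma tree_prefix {T} (hT : IsTree T) {s t : List ℕ} (ht : t ∈ T) (h : s <+: t) : s ∈ T := by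
  rw [List.prefix_iff_eq_take.1 h]; exact hT.2 t ht _

lemma isTree_pre (t : ℕ → List ℕ) : IsTree {u | ∃ j, u <+: t j} :=
  ⟨⟨t 0, 0, List.prefix_rfl⟩, fun _ ⟨j, hj⟩ n => ⟨j, (List.take_prefix n _).trans hj⟩⟩

open MeasureTheory Pointwise in
lemma miller {h} (H : HH h) (T) (hT : IsMillerTree T) :
    ∃ T' ⊆ T, IsMillerTree T' ∧ volume (GS + h '' treeBody T') = 0 := by
  obtain ⟨hT, hM⟩ := hT
  have he : ∀ (s : List ℕ), ∃ t, s ∈ T → t ∈ T ∧ s <+: t ∧ (succs T t).Infinite := by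
    intro s
    by_cases hs : s ∈ T
    · obtain ⟨t, h1, h2⟩ := hM s hs
      exact ⟨t, fun _ => ⟨h1, h2⟩⟩
    · exact ⟨[], fun h => absurd h hs⟩
  choose E hE using he
  have h0 : [] ∈ T := by
    obtain ⟨s, hs⟩ := hT.1
    exact tree_prefix hT hs List.nil_prefix
  obtain ⟨n, hn⟩ := (hE _ h0).2.2.nonempty
  have hn' := hE _ hn
  obtain ⟨t, -, tN, -, tinf, tnull⟩ := fusion H {t | t ∈ T ∧ t ≠ [] ∧ (succs T t).Infinite}
    (fun t ht => ht.2.1) (succs T) (fun t ht => ht.2.2) (fun t n => E (t ++ [n])) (by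
      intro t ht n hn
      obtain ⟨a, b, c⟩ := hE _ hn
      refine ⟨⟨a, ?_, c⟩, b⟩
      rintro hnil; rw [hnil] at b; simp at b) (E (E [] ++ [n])) (by
      obtain ⟨a, b, c⟩ := hn'
      refine ⟨a, ?_, c⟩
      rintro hnil; rw [hnil] at b; simp at b)
  refine ⟨_, ?_, ⟨isTree_pre t, ?_⟩, tnull⟩
  · rintro u ⟨j, hj⟩
    exact tree_prefix hT (tN j).1 hj
  · rintro s ⟨j, hj⟩
    refine ⟨t j, ⟨j, List.prefix_rfl⟩, hj, (tinf j).mono ?_⟩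
    rintro n ⟨hn, i, hi⟩
    exact ⟨i, by rw [hi]; exact (hE _ hn).2.1⟩

open MeasureTheory Pointwise in
lemma laver_core {h} (H : HH h) (T) (hT : IsTree T) (t0) (ht0 : t0 ∈ T) (hne : t0 ≠ [])
    (hinf : ∀ t ∈ T, t0 <+: t → (succs T t).Infinite) :
    ∃ T' ⊆ T, IsTree T' ∧ t0 ∈ T' ∧ (∀ t ∈ T', t0 <+: t ∨ t <+: t0) ∧
      (∀ t ∈ T', t0 <+: t → (succs T' t).Infinite) ∧ volume (GS + h '' treeBody T') = 0 := by
  obtain ⟨t, tz, tN, ts, tinf, tnull⟩ := fusion H {t | t ∈ T ∧ t0 <+: t}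
    (by
      rintro t ⟨-, h2⟩ rfl
      exact hne (List.prefix_nil.1 h2)) (succs T) (fun t ht => hinf t ht.1 ht.2) (fun t n => t ++ [n]) (by
      intro t ht n hn
      exact ⟨⟨hn, ht.2.trans (List.prefix_append _ _)⟩, List.prefix_rfl⟩) t0 ⟨ht0, List.prefix_rfl⟩
  refine ⟨_, ?_, isTree_pre t, ⟨0, by rw [tz]⟩, ?_, ?_, tnull⟩
  · rintro u ⟨j, hj⟩
    exact tree_prefix hT (tN j).1 hj
  · rintro u ⟨j, hj⟩
    exact List.prefix_or_prefix_of_prefix (tN j).2 hj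
  · have key : ∀ j u, u <+: t j → t0 <+: u → ∃ i, u = t i := by
      intro j
      induction j using Nat.strong_induction_on with
      | _ j ih =>
        intro u hu h0
        cases j with
        | zero =>
          rw [tz] at hu
          exact ⟨0, by rw [tz]; exact hu.eq_of_length_le h0.length_le⟩
        | succ j =>
          obtain ⟨i, hi, n, -, hn⟩ := ts j
          rw [hn] at hu
          rcases List.prefix_concat_iff.1 hu with h1 | h1
          · exact ⟨j+1, by rw [hn, h1]⟩
          · exact ih i (by omega) u h1 h0
    rintro u ⟨j, hj⟩ h0
    obtain ⟨i, rfl⟩ := key j u hj h0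
    refine (tinf i).mono ?_
    rintro n ⟨hn, i', hi'⟩
    exact ⟨i', by rw [hi']⟩

open MeasureTheory Pointwise in
lemma laver {h} (H : HH h) (T) (hT : IsLaverTree T) :
    ∃ T' ⊆ T, IsLaverTree T' ∧ volume (GS + h '' treeBody T') = 0 := by
  obtain ⟨hT, s, hs, -, hinf⟩ := hT
  obtain ⟨n, hn⟩ := (hinf s hs List.prefix_rfl).nonempty
  obtain ⟨T', a, b, c, d, e, f⟩ := laver_core H T hT (s ++ [n]) hn (by simp)
    (fun t ht h => hinf t ht ((List.prefix_append _ _).trans h))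
  exact ⟨T', a, ⟨b, _, c, d, e⟩, f⟩

open MeasureTheory Pointwise in
lemma claver {h} (H : HH h) (T) (hT : IsCompleteLaverTree T) :
    ∃ T' ⊆ T, IsCompleteLaverTree T' ∧ volume (GS + h '' treeBody T') = 0 := by
  obtain ⟨hT, hinf⟩ := hT
  have h0 : [] ∈ T := by
    obtain ⟨s, hs⟩ := hT.1
    exact tree_prefix hT hs List.nil_prefix
  have hR := hinf [] h0
  choose R R1 R2 R3 R4 R5 R6 using fun n : succs T [] =>
    laver_core H T hT [n.1] n.2 (by simp) (fun t ht _ => hinf t ht)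
  obtain ⟨n0, hn0⟩ := hR.nonempty
  refine ⟨⋃ n, R n, Set.iUnion_subset R1, ⟨⟨⟨[n0], Set.mem_iUnion.2 ⟨⟨n0, hn0⟩, R3 _⟩⟩, ?_⟩, ?_⟩, ?_⟩
  · intro s hs k
    obtain ⟨n, hn⟩ := Set.mem_iUnion.1 hs
    exact Set.mem_iUnion.2 ⟨n, (R2 n).2 s hn k⟩
  · intro t ht
    obtain ⟨n, hn⟩ := Set.mem_iUnion.1 ht
    by_cases hnil : t = []
    · subst hnil
      refine hR.mono fun m hm => Set.mem_iUnion.2 ⟨⟨m, hm⟩, R3 _⟩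
    · have : [n.1] <+: t := by
        rcases R4 n t hn with h1 | h1
        · exact h1
        · rcases List.prefix_concat_iff.1 (show t <+: [] ++ [n.1] from h1) with h2 | h2
          · rw [h2]; exact List.prefix_rfl
          · exact absurd (List.prefix_nil.1 h2) hnil
      exact (R5 n t hn this).mono fun m hm => Set.mem_iUnion.2 ⟨n, hm⟩
  · have hsub : GS + h '' treeBody (⋃ n, R n) ⊆ ⋃ n, (GS + h '' treeBody (R n)) := by
      rintro _ ⟨a, ha, _, ⟨x, hx, rfl⟩, rfl⟩
      have hx0 : ∀ (n : succs T []) (L : ℕ), (List.ofFn fun i : Fin (L+1) => x i) ∈ R n → n.1 = x 0 := by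
        intro n L hL
        rw [List.ofFn_succ] at hL
        rcases R4 n _ hL with h1 | h1
        · simpa using (List.cons_prefix_cons.1 h1).1
        · simpa using (List.cons_prefix_cons.1 h1).1.symm
      obtain ⟨n, hn⟩ := Set.mem_iUnion.1 (hx 1)
      have hnx := hx0 n 0 hn
      refine Set.mem_iUnion.2 ⟨n, Set.add_mem_add ha ⟨x, fun L => ?_, rfl⟩⟩
      cases L with
      | zero => simpa using tree_prefix (R2 n) (R3 n) List.nil_prefix
      | succ L =>
        obtain ⟨m, hm⟩ := Set.mem_iUnion.1 (hx (L+1))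
        have : m = n := Subtype.ext ((hx0 m L hm).trans hnx.symm)
        rw [← this]; exact hm
    exact measure_mono_null hsub (measure_iUnion_null R6)

end S14

open MeasureTheory Pointwise in
/-- there is an embedding of Baire space onto the irrationals and a dense
Gδ set G such that each Miller (Laver, complete Laver) tree has a Miller (Laver,
complete Laver) subtree T' with G + h([T']) Lebesgue null. -/
theorem stmt14 :
    ∃ h : (ℕ → ℕ) → ℝ, Topology.IsEmbedding h ∧ Set.range h = {x : ℝ | Irrational x} ∧
      ∃ G : Set ℝ, Dense G ∧ IsGδ G ∧
        (∀ T, IsMillerTree T →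
          ∃ T' ⊆ T, IsMillerTree T' ∧ volume (G + h '' treeBody T') = 0) ∧
        (∀ T, IsLaverTree T →
          ∃ T' ⊆ T, IsLaverTree T' ∧ volume (G + h '' treeBody T') = 0) ∧
        (∀ T, IsCompleteLaverTree T →
          ∃ T' ⊆ T, IsCompleteLaverTree T' ∧ volume (G + h '' treeBody T') = 0) := by
  obtain ⟨h, h1, h2, H⟩ := S14.exists_h
  exact ⟨h, h1, h2, S14.GS, S14.GS_dense, S14.GS_Gδ, S14.miller H, S14.laver H, S14.claver H⟩
end

section
/- Assume the continuum 𝔠 = 2^ℵ₀ is a regular cardinal. Then for every generalized Luzin set L ⊆ ℝ and every generalized Sierpiński set S ⊆ ℝ, the algebraic sum L + S = {l + s : l ∈ L, s ∈ S} is s₀-small in ℝ: for every nonempty perfect set P ⊆ ℝ there exists a nonempty perfect set Q ⊆ P with Q ∩ (L + S) = ∅. -/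
open Cardinal Set

/-- Generalized Luzin set: meets every meager set in size < |L|. -/
def IsGenLuzin (L : Set ℝ) : Prop :=
  ∀ M : Set ℝ, IsMeagre M → Cardinal.mk ↑(L ∩ M) < Cardinal.mk ↑L

/-- Generalized Sierpiński set: meets every Lebesgue null set in size < |S|. -/
def IsGenSierpinski (S : Set ℝ) : Prop :=
  ∀ N : Set ℝ, MeasureTheory.volume N = 0 → Cardinal.mk ↑(S ∩ N) < Cardinal.mk ↑S

universe u in
lemma aux_reg (h : Cardinal.continuum.{u}.IsRegular) : Cardinal.continuum.{0}.IsRegular := by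
  refine ⟨Cardinal.aleph0_le_continuum, ?_⟩
  have h1 := h.le_cof_ord
  rw [← Cardinal.lift_continuum.{u, 0}, ← Cardinal.lift_ord, ← Ordinal.lift_cof] at h1
  exact Cardinal.lift_le.1 h1

lemma aux_preperf (y : ℕ → Bool) (U : Set (ℕ → Bool)) (hU : U ∈ nhds y) :
    ∃ z ∈ U, z ≠ y := by
  have ht : Filter.Tendsto (fun n : ℕ => Function.update y n (!(y n))) Filter.atTop (nhds y) := by
    rw [tendsto_pi_nhds]
    intro i
    apply tendsto_const_nhds.congr'
    filter_upwards [Filter.eventually_gt_atTop i] with n hn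
    rw [Function.update_of_ne (by omega)]
  obtain ⟨n, hn⟩ := (ht.eventually hU).exists
  refine ⟨_, hn, fun h => ?_⟩
  have := congrFun h n
  simp at this

lemma aux_split (P : Set ℝ) (hP : Perfect P) (hne : P.Nonempty) :
    ∃ Q : (ℕ → Bool) → Set ℝ, (∀ x, Q x ⊆ P ∧ Perfect (Q x) ∧ (Q x).Nonempty ∧ IsCompact (Q x)) ∧
      Pairwise (Function.onFun Disjoint Q) := by
  obtain ⟨f, hf, hc, hi⟩ := hP.exists_nat_bool_injection hne
  let e : (ℕ → Bool) → (ℕ → Bool) → (ℕ → Bool) :=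
    fun x y n => if n % 2 = 0 then x (n / 2) else y (n / 2)
  have he1 : ∀ x y n, e x y (2 * n) = x n := by intro x y n; simp [e]
  have he2 : ∀ x y n, e x y (2 * n + 1) = y n := by
    intro x y n
    have : (2 * n + 1) / 2 = n := by omega
    simp [e, this]
  have hec : ∀ x, Continuous (e x) := by
    intro x
    refine continuous_pi fun n => ?_
    by_cases h : n % 2 = 0
    · simp only [e, h, if_true]; exact continuous_const
    · simp only [e, h, if_false]; exact continuous_apply _
  have hcf : ∀ x, Continuous (fun y => f (e x y)) := fun x => hc.comp (hec x)
  refine ⟨fun x => range fun y => f (e x y), fun x => ⟨?_, ?_, range_nonempty _, ?_⟩, ?_⟩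
  · rintro _ ⟨y, rfl⟩
    exact hf ⟨_, rfl⟩
  · refine ⟨(isCompact_range (hcf x)).isClosed, ?_⟩
    rw [preperfect_iff_nhds]
    rintro _ ⟨y, rfl⟩ U hU
    obtain ⟨z, hz, hzy⟩ := aux_preperf y _ ((hcf x).continuousAt.preimage_mem_nhds hU)
    refine ⟨f (e x z), ⟨hz, ⟨z, rfl⟩⟩, fun h => hzy ?_⟩
    have := hi h
    funext n
    rw [← he2 x z n, this, he2]
  · exact isCompact_range (hcf x)
  · intro x x' hx
    rw [Function.onFun, Set.disjoint_left]
    rintro _ ⟨y, rfl⟩ ⟨y', hy'⟩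
    apply hx
    have := hi hy'
    funext n
    rw [← he1 x y n, ← this, he1]

lemma aux_null (P : Set ℝ) (hP : Perfect P) (hne : P.Nonempty) :
    ∃ Q ⊆ P, Perfect Q ∧ Q.Nonempty ∧ IsCompact Q ∧ MeasureTheory.volume Q = 0 := by
  obtain ⟨Q, hQ, hd⟩ := aux_split P hP hne
  have h := MeasureTheory.Measure.countable_meas_pos_of_disjoint_iUnion
    (μ := (MeasureTheory.volume : MeasureTheory.Measure ℝ))
    (fun i => (hQ i).2.2.2.isClosed.measurableSet) hd
  have : ∃ x, MeasureTheory.volume (Q x) = 0 := by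
    by_contra! hcon
    have hu : {i | 0 < MeasureTheory.volume (Q i)} = Set.univ :=
      eq_univ_of_forall fun i => pos_iff_ne_zero.2 (hcon i)
    rw [hu, Set.countable_univ_iff, ← Cardinal.mk_le_aleph0_iff] at h
    simp at h
    exact absurd h (not_le.2 Cardinal.aleph0_lt_continuum)
  obtain ⟨x, hx⟩ := this
  exact ⟨Q x, (hQ x).1, (hQ x).2.1, (hQ x).2.2.1, (hQ x).2.2.2, hx⟩

lemma aux_small (P : Set ℝ) (hP : Perfect P) (hne : P.Nonempty) (A : Set ℝ)
    (hA : #↑(P ∩ A) < Cardinal.continuum) :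
    ∃ Q ⊆ P, Perfect Q ∧ Q.Nonempty ∧ Q ∩ A = ∅ := by
  obtain ⟨Q, hQ, hd⟩ := aux_split P hP hne
  by_contra! hcon
  have h : ∀ x, ∃ a, a ∈ Q x ∩ A := fun x => hcon (Q x) (hQ x).1 (hQ x).2.1 (hQ x).2.2.1
  choose g hg using h
  have : #(ℕ → Bool) ≤ #↑(P ∩ A) := by
    refine Cardinal.mk_le_of_injective
      (f := fun x => (⟨g x, (hQ x).1 (hg x).1, (hg x).2⟩ : ↑(P ∩ A))) ?_
    intro x y hxy
    by_contra hne
    have hxy : g x = g y := congrArg Subtype.val hxy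
    exact Set.disjoint_left.1 (hd hne) (hg x).1 (hxy ▸ (hg y).1)
  have h2 : #(ℕ → Bool) = Cardinal.continuum := by simp
  rw [h2] at this
  exact absurd hA (not_lt.2 this)

lemma aux_G (Q : Set ℝ) (hQ : IsCompact Q) (h0 : MeasureTheory.volume Q = 0) :
    ∃ G ∈ residual ℝ, ∃ N : Set ℝ, MeasureTheory.volume N = 0 ∧
      ∀ l ∈ G, ∀ s, l + s ∈ Q → s ∈ N := by
  have ht := tendsto_measure_cthickening_of_isCompact
    (μ := (MeasureTheory.volume : MeasureTheory.Measure ℝ)) hQ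
  rw [h0] at ht
  obtain ⟨δ, hδ0, hδ⟩ := ENNReal.exists_pos_sum_of_countable' (ι := ℕ) one_ne_zero
  have hex : ∀ n, ∃ r > 0, MeasureTheory.volume (Metric.cthickening r Q) < δ n := by
    intro n
    have h1 := (ht.mono_left (nhdsWithin_le_nhds (s := Ioi 0))).eventually (gt_mem_nhds (hδ0 n))
    obtain ⟨r, hr, hr'⟩ := (h1.and self_mem_nhdsWithin).exists
    exact ⟨r, hr', hr⟩
  choose r hr hrQ using hex
  let e : ℕ → ℝ := fun n => TopologicalSpace.denseSeq ℝ (Nat.unpair n).1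
  let U : ℕ → Set ℝ := fun k => ⋃ n ≥ k, Metric.ball (e n) (r n)
  let B : ℕ → Set ℝ := fun n => (fun s => s + e n) ⁻¹' Metric.cthickening (r n) Q
  refine ⟨⋂ k, U k, ?_, Filter.limsup B Filter.atTop, ?_, ?_⟩
  · rw [countable_iInter_mem]
    intro k
    apply residual_of_dense_open
    · exact isOpen_iUnion fun n => isOpen_iUnion fun _ => Metric.isOpen_ball
    · refine (TopologicalSpace.denseRange_denseSeq ℝ).mono ?_
      rintro _ ⟨j, rfl⟩
      refine mem_iUnion₂.2 ⟨Nat.pair j k, Nat.right_le_pair j k, ?_⟩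
      simp only [e, Nat.unpair_pair]
      exact Metric.mem_ball_self (hr _)
  · apply MeasureTheory.measure_limsup_atTop_eq_zero
    refine ne_top_of_le_ne_top (hδ.trans_le le_top).ne (ENNReal.tsum_le_tsum fun n => ?_)
    simp only [B, MeasureTheory.measure_preimage_add_right]
    exact (hrQ n).le
  · intro l hl s hs
    rw [Filter.mem_limsup_iff_frequently_mem, Filter.frequently_atTop]
    intro k
    obtain ⟨n, hn, hln⟩ := mem_iUnion₂.1 (mem_iInter.1 hl k)
    refine ⟨n, hn, ?_⟩
    refine Metric.mem_cthickening_of_dist_le _ (l + s) _ _ hs ?_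
    rw [Metric.mem_ball, dist_comm] at hln
    rw [add_comm l s, dist_add_left]
    exact hln.le

lemma aux_meagre_shift (M : Set ℝ) (hM : IsMeagre M) (c : ℝ) :
    IsMeagre ((fun x => x + c) ⁻¹' M) :=
  hM.preimage_of_isOpenMap (continuous_add_const c) (Homeomorph.addRight c).isOpenMap

lemma aux_null_shift (M : Set ℝ) (hM : MeasureTheory.volume M = 0) (c : ℝ) :
    MeasureTheory.volume ((fun x => x + c) ⁻¹' M) = 0 := by
  rw [MeasureTheory.measure_preimage_add_right, hM]

lemma aux_cover (hreg : Cardinal.continuum.{0}.IsRegular) (I A : Set ℝ) (t : ℝ → Set ℝ)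
    (hI : #I < Cardinal.continuum) (ht : ∀ i ∈ I, #(t i) < Cardinal.continuum)
    (hA : ∀ a ∈ A, ∃ i ∈ I, a ∈ t i) : #A < Cardinal.continuum := by
  refine (Cardinal.mk_le_mk_of_subset (t := ⋃ i ∈ I, t i) ?_).trans_lt
    ((Cardinal.card_biUnion_lt_iff_forall_of_isRegular hreg hI).2 ht)
  intro a ha
  obtain ⟨i, hi, h⟩ := hA a ha
  exact mem_iUnion₂.2 ⟨i, hi, h⟩

lemma aux_card (A : Set ℝ) : #A ≤ Cardinal.continuum :=
  (Cardinal.mk_set_le A).trans_eq Cardinal.mk_real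

lemma aux_caseL (hreg : Cardinal.continuum.{0}.IsRegular)
    (L S : Set ℝ) (hL : IsGenLuzin L) (hS : IsGenSierpinski S)
    (hc : #S < Cardinal.continuum) : #L < Cardinal.continuum := by
  by_contra hn
  have hLc : #L = Cardinal.continuum := le_antisymm (aux_card L) (not_lt.1 hn)
  have hG : IsMeagre {x : ℝ | ¬ Liouville x} := by
    have := eventually_residual_liouville
    rw [IsMeagre]
    filter_upwards [this] with x hx
    simpa using hx
  apply hn
  refine aux_cover hreg S L (fun s => L ∩ (fun x => x + (-s)) ⁻¹' {x : ℝ | ¬ Liouville x}) hc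
    (fun s _ => hLc ▸ hL _ (aux_meagre_shift _ hG _)) ?_
  intro a ha
  have hnull : MeasureTheory.volume ((fun x : ℝ => a - x) ⁻¹' {x : ℝ | Liouville x}) = 0 := by
    have h1 : MeasureTheory.volume {x : ℝ | Liouville x} = 0 := volume_setOfPred_liouville
    rw [(MeasureTheory.Measure.measurePreserving_sub_left
      (MeasureTheory.volume : MeasureTheory.Measure ℝ) a).measure_preimage
      (MeasureTheory.NullMeasurableSet.of_null h1), h1]
  by_contra! hcon
  have := hS _ hnull
  rw [inter_eq_left.2] at this
  · exact lt_irrefl _ this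
  · intro s hs
    have := hcon s hs
    by_contra hcc
    exact this ⟨ha, by simpa [sub_eq_add_neg] using hcc⟩

lemma aux_caseS (hreg : Cardinal.continuum.{0}.IsRegular)
    (L S : Set ℝ) (hL : IsGenLuzin L) (hS : IsGenSierpinski S)
    (hc : #L < Cardinal.continuum) : #S < Cardinal.continuum := by
  by_contra hn
  have hSc : #S = Cardinal.continuum := le_antisymm (aux_card S) (not_lt.1 hn)
  have hG : IsMeagre {x : ℝ | ¬ Liouville x} := by
    have := eventually_residual_liouville
    rw [IsMeagre]
    filter_upwards [this] with x hx
    simpa using hx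
  apply hn
  refine aux_cover hreg L S (fun s => S ∩ (fun x => x + (-s)) ⁻¹' {x : ℝ | Liouville x}) hc
    (fun s _ => hSc ▸ hS _ (aux_null_shift _ volume_setOfPred_liouville _)) ?_
  intro a ha
  have hnull : IsMeagre ((fun x : ℝ => a - x) ⁻¹' {x : ℝ | ¬ Liouville x}) :=
    hG.preimage_of_isOpenMap (by fun_prop) (Homeomorph.subLeft a).isOpenMap
  by_contra! hcon
  have := hL _ hnull
  rw [inter_eq_left.2] at this
  · exact lt_irrefl _ this
  · intro s hs
    have := hcon s hs
    by_contra hcc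
    exact this ⟨ha, by simpa [sub_eq_add_neg] using hcc⟩

open Pointwise in
/-- if 𝔠 is regular then L + S is s₀-small in ℝ. -/
theorem stmt16 (hreg : Cardinal.continuum.IsRegular)
    (L S : Set ℝ) (hL : IsGenLuzin L) (hS : IsGenSierpinski S) :
    ∀ P : Set ℝ, Perfect P → P.Nonempty →
      ∃ Q ⊆ P, Perfect Q ∧ Q.Nonempty ∧ Q ∩ (L + S) = ∅ := by
  replace hreg := aux_reg hreg
  intro P hP hne
  by_cases hlt : #L < Cardinal.continuum
  · have hSlt := aux_caseS hreg L S hL hS hlt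
    apply aux_small P hP hne
    exact (Cardinal.mk_le_mk_of_subset inter_subset_right).trans_lt
      ((Cardinal.mk_add_le).trans_lt (Cardinal.mul_lt_of_lt hreg.aleph0_le hlt hSlt))
  have hLc : #L = Cardinal.continuum := le_antisymm (aux_card L) (not_lt.1 hlt)
  have hSc : #S = Cardinal.continuum :=
    le_antisymm (aux_card S) (not_lt.1 fun h => hlt (aux_caseL hreg L S hL hS h))
  obtain ⟨Q, hQP, hQ, hQne, hQc, hQ0⟩ := aux_null P hP hne
  obtain ⟨G, hG, N, hN, hGN⟩ := aux_G Q hQc hQ0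
  have hQm : IsMeagre Q := by
    rw [IsMeagre]
    refine residual_of_dense_open hQ.closed.isOpen_compl ?_
    rw [← interior_eq_empty_iff_dense_compl]
    exact MeasureTheory.Measure.interior_eq_empty_of_null hQ0
  have hGm : IsMeagre Gᶜ := by rwa [IsMeagre, compl_compl]
  have key : #↑(Q ∩ (L + S)) < Cardinal.continuum := by
    have h1 : #↑(⋃ l ∈ L ∩ Gᶜ, (fun s => l + s) '' (S ∩ (fun x => x + l) ⁻¹' Q))
        < Cardinal.continuum := by
      refine (Cardinal.card_biUnion_lt_iff_forall_of_isRegular hreg (hLc ▸ hL _ hGm)).2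
        fun l _ => Cardinal.mk_image_le.trans_lt ?_
      exact hSc ▸ hS _ (aux_null_shift _ hQ0 _)
    have h2 : #↑(⋃ s ∈ S ∩ N, (fun l => l + s) '' (L ∩ (fun x => x + s) ⁻¹' Q))
        < Cardinal.continuum := by
      refine (Cardinal.card_biUnion_lt_iff_forall_of_isRegular hreg (hSc ▸ hS _ hN)).2
        fun s _ => Cardinal.mk_image_le.trans_lt ?_
      exact hLc ▸ hL _ (aux_meagre_shift _ hQm _)
    refine (Cardinal.mk_le_mk_of_subset ?_).trans_lt ((Cardinal.mk_union_le _ _).trans_lt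
      (Cardinal.add_lt_of_lt hreg.aleph0_le h1 h2))
    rintro q ⟨hq, l, hl, s, hs, rfl⟩
    have hq : l + s ∈ Q := hq
    by_cases hlG : l ∈ G
    · right
      exact mem_iUnion₂.2 ⟨s, ⟨hs, hGN l hlG s hq⟩, l, ⟨hl, hq⟩, rfl⟩
    · left
      exact mem_iUnion₂.2 ⟨l, ⟨hl, hlG⟩, s, ⟨hs, by simpa [add_comm] using hq⟩, rfl⟩
  obtain ⟨Q', h1, h2, h3, h4⟩ := aux_small Q hQ hQne _ key
  exact ⟨Q', h1.trans hQP, h2, h3, h4⟩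
end

section
/- There exists a topological embedding h of the Baire space ℕ → ℕ into ℝ whose range is exactly the set of irrational numbers such that: if the continuum 𝔠 = 2^ℵ₀ is a regular cardinal, then for every generalized Luzin set L ⊆ ℝ and every generalized Sierpiński set S ⊆ ℝ, the preimage h⁻¹(L + S) of the algebraic sum L + S = {l + s : l ∈ L, s ∈ S} belongs to each of the tree ideals s₀, m₀, l₀ and cl₀. -/
open Cardinal Set

section Emb
open Topology Filter

lemma exists_part (a b c : ℚ) : ∃ P : ℤ → ℚ, a < b → (StrictMono P ∧ (∀ k, a < P k ∧ P k < b) ∧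
    (a < c → c < b → ∃ k, P k = c) ∧
    ∀ r : ℝ, Irrational r → (a : ℝ) < r → r < b → ∃ k, (P k : ℝ) < r ∧ r < (P (k+1) : ℚ)) := by
  by_cases hab : a < b
  swap
  · exact ⟨fun _ => 0, fun h => absurd h hab⟩
  haveI : Nonempty (Set.Ioo a b) := (Set.nonempty_Ioo.2 hab).to_subtype
  obtain ⟨φ⟩ := Order.iso_of_countable_dense ℚ (Set.Ioo a b)
  obtain ⟨c', hc'⟩ : ∃ c' : Set.Ioo a b, (a < c → c < b → (c' : ℚ) = c) := by
    by_cases h : a < c ∧ c < b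
    · exact ⟨⟨c, h⟩, fun _ _ => rfl⟩
    · exact ⟨Classical.arbitrary _, fun h1 h2 => absurd ⟨h1, h2⟩ h⟩
  let P : ℤ → ℚ := fun k => (φ (φ.symm c' + k) : ℚ)
  have hmono : StrictMono P := by
    intro i j hij
    have : φ (φ.symm c' + i) < φ (φ.symm c' + j) := by
      apply φ.strictMono
      have : (i : ℚ) < j := by exact_mod_cast hij
      linarith
    exact this
  refine ⟨P, fun _ => ⟨hmono, fun k => (φ (φ.symm c' + k)).2, ?_, ?_⟩⟩
  · intro h1 h2
    exact ⟨0, by simp [P, hc' h1 h2]⟩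
  · intro r hr har hrb
    obtain ⟨u, hu1, hu2⟩ := exists_rat_btwn har
    obtain ⟨v, hv1, hv2⟩ := exists_rat_btwn hrb
    have hu1 : a < u := by exact_mod_cast hu1
    have hv2 : v < b := by exact_mod_cast hv2
    have huv : u < v := by exact_mod_cast hu2.trans hv1
    let u' : Set.Ioo a b := ⟨u, hu1, huv.trans hv2⟩
    let v' : Set.Ioo a b := ⟨v, hu1.trans huv, hv2⟩
    have key1 : ∃ k, (P k : ℝ) < r := by
      obtain ⟨k, hk⟩ := exists_int_lt (φ.symm u' - φ.symm c')
      refine ⟨k, lt_trans ?_ hu2⟩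
      have : φ (φ.symm c' + k) < u' := by
        rw [← φ.lt_symm_apply]; linarith
      have h2 : P k < u := this
      exact_mod_cast h2
    have key2 : ∃ m, ∀ k, (P k : ℝ) < r → k ≤ m := by
      obtain ⟨m, hm⟩ := exists_int_gt (φ.symm v' - φ.symm c')
      refine ⟨m, fun k hk => ?_⟩
      by_contra hcon
      push Not at hcon
      have : v' < φ (φ.symm c' + m) := by
        rw [← φ.symm_apply_lt]; linarith
      have h2 : v < P m := this
      have h3 : v < P k := h2.trans (hmono hcon)
      have h4 : (v : ℝ) < P k := by exact_mod_cast h3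
      linarith
    obtain ⟨k, hk1, hk2⟩ := Int.exists_greatest_of_bdd key2 key1
    refine ⟨k, hk1, ?_⟩
    by_contra hcon
    push Not at hcon
    rcases hcon.lt_or_eq with h | h
    · have := hk2 _ h; omega
    · exact hr ⟨_, h⟩

noncomputable def ivl (P : ℚ → ℚ → ℚ → ℤ → ℚ) (e : ℕ → ℚ) (d : ℕ ≃ ℤ) (x : ℕ → ℕ) : ℕ → ℚ × ℚ
  | 0 => (d (x 0), d (x 0) + 1)
  | n+1 => (P (ivl P e d x n).1 (ivl P e d x n).2 (e n) (d (x (n+1))),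
            P (ivl P e d x n).1 (ivl P e d x n).2 (e n) (d (x (n+1)) + 1))

noncomputable def jvl (P : ℚ → ℚ → ℚ → ℤ → ℚ) (e : ℕ → ℚ) (d : ℕ ≃ ℤ)
    (K : ℚ → ℚ → ℚ → ℤ) (k0 : ℤ) : ℕ → (ℚ × ℚ) × ℕ
  | 0 => ((k0, k0 + 1), d.symm k0)
  | n+1 => 
    let J := jvl P e d K k0 n
    let k := K J.1.1 J.1.2 (e n)
    ((P J.1.1 J.1.2 (e n) k, P J.1.1 J.1.2 (e n) (k+1)), d.symm k)

theorem exists_emb : ∃ h : (ℕ → ℕ) → ℝ, IsEmbedding h ∧ Set.range h = {x : ℝ | Irrational x} := by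
  choose P hP using exists_part
  obtain ⟨e, he⟩ := exists_surjective_nat ℚ
  let d : ℕ ≃ ℤ := Equiv.intEquivNat.symm
  let lo : (ℕ → ℕ) → ℕ → ℚ := fun x n => (ivl P e d x n).1
  let hi : (ℕ → ℕ) → ℕ → ℚ := fun x n => (ivl P e d x n).2
  have lo0 : ∀ x, lo x 0 = d (x 0) := fun x => rfl
  have hi0 : ∀ x, hi x 0 = d (x 0) + 1 := fun x => rfl
  have loS : ∀ x n, lo x (n+1) = P (lo x n) (hi x n) (e n) (d (x (n+1))) := fun x n => rfl
  have hiS : ∀ x n, hi x (n+1) = P (lo x n) (hi x n) (e n) (d (x (n+1)) + 1) := fun x n => rfl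
  have hlt : ∀ x n, lo x n < hi x n := by
    intro x n
    induction n with
    | zero => rw [lo0, hi0]; linarith
    | succ n ih => rw [loS, hiS]; exact (hP _ _ _ ih).1 (by omega)
  have hlo : ∀ x, StrictMono (lo x) := fun x => strictMono_nat_of_lt_succ fun n => by
    rw [loS]; exact ((hP _ _ _ (hlt x n)).2.1 _).1
  have hhi : ∀ x, StrictAnti (hi x) := fun x => strictAnti_nat_of_succ_lt fun n => by
    rw [hiS]; exact ((hP _ _ _ (hlt x n)).2.1 _).2
  have hlohi : ∀ x m n, lo x m < hi x n := fun x m n =>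
    lt_of_le_of_lt ((hlo x).monotone (le_max_left m n))
      (lt_of_lt_of_le (hlt x _) ((hhi x).antitone (le_max_right m n)))
  have hrat : ∀ x (q : ℚ), ∃ n, ¬ (lo x n < q ∧ q < hi x n) := by
    intro x q
    obtain ⟨n, rfl⟩ := he q
    by_cases hn : lo x n < e n ∧ e n < hi x n
    · obtain ⟨hmono, -, h2, -⟩ := hP _ _ (e n) (hlt x n)
      obtain ⟨k, hk⟩ := h2 hn.1 hn.2
      refine ⟨n+1, ?_⟩
      rw [loS, hiS]
      rintro ⟨h3, h4⟩
      generalize hi x n = b at *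
      generalize lo x n = a at *
      rw [← hk] at h3 h4
      rw [hk] at h3 h4
      rw [← hk] at h3
      have h3' : P a b (e n) (d (x (n+1))) < P a b (e n) k := by rw [hk]; rw [hk] at h3; exact h3
      have h4' : P a b (e n) k < P a b (e n) (d (x (n+1)) + 1) := by rw [hk]; exact h4
      have := hmono.lt_iff_lt.1 h3'
      have := hmono.lt_iff_lt.1 h4'
      omega
    · exact ⟨n, hn⟩
  let h : (ℕ → ℕ) → ℝ := fun x => ⨆ n, (lo x n : ℝ)
  have hbdd : ∀ x, BddAbove (Set.range fun n => (lo x n : ℝ)) := fun x =>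
    ⟨hi x 0, by rintro _ ⟨n, rfl⟩; show (lo x n : ℝ) ≤ hi x 0; exact_mod_cast (hlohi x n 0).le⟩
  have h1 : ∀ x n, (lo x n : ℝ) < h x := fun x n =>
    lt_of_lt_of_le (by exact_mod_cast hlo x (Nat.lt_succ_self n)) (le_ciSup (hbdd x) (n+1))
  have h2 : ∀ x n, h x < (hi x n : ℝ) := fun x n =>
    lt_of_le_of_lt (ciSup_le fun m => by exact_mod_cast (hlohi x m (n+1)).le)
      (by exact_mod_cast hhi x (Nat.lt_succ_self n) : (hi x (n+1) : ℝ) < hi x n)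
  have hirr : ∀ x, Irrational (h x) := by
    rintro x ⟨q, hq⟩
    obtain ⟨n, hn⟩ := hrat x q
    apply hn
    have a1 := h1 x n
    have a2 := h2 x n
    rw [← hq] at a1 a2
    exact ⟨by exact_mod_cast a1, by exact_mod_cast a2⟩
  -- shrinking
  have hup : ∀ x (v : ℝ), h x < v → ∃ n, (hi x n : ℝ) ≤ v := by
    intro x v hv
    obtain ⟨q, hq1, hq2⟩ := exists_rat_btwn hv
    obtain ⟨n, hn⟩ := hrat x q
    refine ⟨n, ?_⟩
    by_contra hcon
    push Not at hcon
    apply hn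
    exact ⟨by exact_mod_cast (h1 x n).trans hq1, by exact_mod_cast hq2.trans hcon⟩
  have hdn : ∀ x (v : ℝ), v < h x → ∃ n, v ≤ (lo x n : ℝ) := by
    intro x v hv
    obtain ⟨q, hq1, hq2⟩ := exists_rat_btwn hv
    obtain ⟨n, hn⟩ := hrat x q
    refine ⟨n, ?_⟩
    by_contra hcon
    push Not at hcon
    apply hn
    exact ⟨by exact_mod_cast hcon.trans hq1, by exact_mod_cast hq2.trans (h2 x n)⟩
  have hdep : ∀ x y n, (∀ i ≤ n, y i = x i) → lo y n = lo x n ∧ hi y n = hi x n := by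
    intro x y n
    induction n with
    | zero => intro hxy; simp only [lo0, hi0, hxy 0 le_rfl]; simp
    | succ n ih =>
      intro hxy
      obtain ⟨i1, i2⟩ := ih fun i hi => hxy i (by omega)
      simp only [loS, hiS, i1, i2, hxy (n+1) le_rfl]; simp
  have hdet : ∀ x y n, (lo x n : ℝ) < h y → h y < hi x n → ∀ i ≤ n, y i = x i := by
    intro x y n
    induction n with
    | zero =>
      intro a1 a2 i hi'
      obtain rfl : i = 0 := by omega
      have b1 := h1 y 0
      have b2 := h2 y 0
      rw [lo0] at a1 b1
      rw [hi0] at a2 b2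
      push_cast at a1 a2 b1 b2
      have c1 : ((d (x 0) : ℤ) : ℝ) < d (y 0) + 1 := a1.trans b2
      have c2 : ((d (y 0) : ℤ) : ℝ) < d (x 0) + 1 := b1.trans a2
      have c1 : d (x 0) < d (y 0) + 1 := by exact_mod_cast c1
      have c2 : d (y 0) < d (x 0) + 1 := by exact_mod_cast c2
      exact d.injective (by omega)
    | succ n ih =>
      intro a1 a2
      have ih := ih (lt_trans (by exact_mod_cast hlo x (Nat.lt_succ_self n)) a1)
        (lt_trans a2 (by exact_mod_cast hhi x (Nat.lt_succ_self n)))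
      intro i hi'
      rcases Nat.lt_or_ge i (n+1) with hlt' | hge
      · exact ih i (by omega)
      obtain rfl : i = n+1 := by omega
      obtain ⟨e1, e2⟩ := hdep x y n ih
      have b1 := h1 y (n+1)
      have b2 := h2 y (n+1)
      rw [loS] at a1 b1
      rw [hiS] at a2 b2
      rw [e1, e2] at b1 b2
      have hmono := (hP _ _ (e n) (hlt x n)).1
      have c1 := a1.trans b2
      have c2 := b1.trans a2
      have c1 := hmono.lt_iff_lt.1 (by exact_mod_cast c1)
      have c2 := hmono.lt_iff_lt.1 (by exact_mod_cast c2)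
      exact d.injective (by omega)
  refine ⟨h, ⟨?_, ?_⟩, ?_⟩
  · rw [isInducing_iff_nhds]
    intro x
    apply le_antisymm
    · rw [← Filter.tendsto_iff_comap]
      rw [tendsto_order]
      have hcyl : ∀ n, ∀ᶠ y in 𝓝 x, ∀ i ≤ n, y i = x i := by
        intro n
        have := (PiNat.isOpen_cylinder (fun _ => ℕ) x (n+1)).mem_nhds (PiNat.self_mem_cylinder x (n+1))
        filter_upwards [this] with y hy i hi'
        exact hy i (by omega)
      constructor
      · intro v hv
        obtain ⟨n, hn⟩ := hdn x v hv
        filter_upwards [hcyl n] with y hy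
        have := h1 y n
        rw [(hdep x y n hy).1] at this
        linarith
      · intro v hv
        obtain ⟨n, hn⟩ := hup x v hv
        filter_upwards [hcyl n] with y hy
        have := h2 y n
        rw [(hdep x y n hy).2] at this
        linarith
    · rw [nhds_pi, Filter.pi, le_iInf_iff]
      intro i
      rw [← Filter.tendsto_iff_comap, nhds_discrete ℕ, tendsto_pure]
      rw [eventually_comap]
      filter_upwards [Ioo_mem_nhds (h1 x i) (h2 x i)] with r hr y hy
      subst hy
      exact hdet x y i hr.1 hr.2 i le_rfl
  · intro x y hxy
    funext i
    have a1 := h1 y i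
    have a2 := h2 y i
    rw [← hxy] at a1 a2
    exact hdet y x i a1 a2 i le_rfl
  · apply Set.Subset.antisymm
    · rintro _ ⟨x, rfl⟩; exact hirr x
    · intro r hr
      have hr : Irrational r := hr
      have : ∀ a b c : ℚ, ∃ k : ℤ, a < b → (a : ℝ) < r → r < b →
          (P a b c k : ℝ) < r ∧ r < (P a b c (k+1) : ℚ) := by
        intro a b c
        by_cases hh : a < b ∧ (a : ℝ) < r ∧ r < b
        · obtain ⟨k, hk⟩ := (hP a b c hh.1).2.2.2 r hr hh.2.1 hh.2.2
          exact ⟨k, fun _ _ _ => hk⟩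
        · exact ⟨0, fun a1 a2 a3 => absurd ⟨a1, a2, a3⟩ hh⟩
      choose K hK using this
      let J := jvl P e d K ⌊r⌋
      let x : ℕ → ℕ := fun n => (J n).2
      have hJ : ∀ n, ivl P e d x n = (J n).1 := by
        intro n
        induction n with
        | zero => simp [ivl, J, x, jvl]
        | succ n ih =>
          rw [ivl, ih]
          simp [J, x, jvl]
      have hmem : ∀ n, (lo x n : ℝ) < r ∧ r < hi x n := by
        intro n
        induction n with
        | zero =>
          rw [lo0, hi0]
          have : d (x 0) = ⌊r⌋ := by simp [x, J, jvl]
          rw [this]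
          push_cast
          refine ⟨lt_of_le_of_ne (Int.floor_le r) ?_, Int.lt_floor_add_one r⟩
          intro hh
          exact hr ⟨⌊r⌋, by simpa using hh⟩
        | succ n ih =>
          have hx : d (x (n+1)) = K (lo x n) (hi x n) (e n) := by
            simp only [lo, hi, hJ n]
            simp [x, J, jvl]
          rw [loS, hiS, hx]
          exact hK _ _ _ (hlt x n) ih.1 ih.2
      refine ⟨x, ?_⟩
      rcases lt_trichotomy (h x) r with hlt' | heq | hgt
      · obtain ⟨n, hn⟩ := hup x r hlt'
        exact absurd (hmem n).2 (not_lt.2 hn)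
      · exact heq
      · obtain ⟨n, hn⟩ := hdn x r hgt
        exact absurd (hmem n).1 (not_lt.2 hn)

end Emb
section Trees

inductive Gen (A : List ℕ → Set ℕ) : List ℕ → Prop
  | nil : Gen A []
  | snoc (t : List ℕ) (n : ℕ) : Gen A t → n ∈ A t → Gen A (t ++ [n])

lemma gen_snoc {A : List ℕ → Set ℕ} {t : List ℕ} {n : ℕ} :
    Gen A (t ++ [n]) ↔ Gen A t ∧ n ∈ A t := by
  constructor
  · intro h
    generalize hs : t ++ [n] = s at h
    cases h with
    | nil => simp at hs
    | snoc t' n' h1 h2 =>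
      obtain ⟨rfl, h3⟩ := List.append_inj' hs rfl
      simp at h3
      subst h3
      exact ⟨h1, h2⟩
  · rintro ⟨h1, h2⟩; exact Gen.snoc t n h1 h2

lemma gen_isTree (A : List ℕ → Set ℕ) : IsTree {t | Gen A t} := by
  refine ⟨⟨[], Gen.nil⟩, ?_⟩
  intro s hs n
  replace hs : Gen A s := hs
  show Gen A (s.take n)
  induction hs with
  | nil => simpa using Gen.nil
  | snoc t m h1 h2 ih =>
    rcases Nat.lt_or_ge t.length n with h | h
    · rw [List.take_of_length_le (by simp; omega)]
      exact Gen.snoc t m h1 h2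
    · rwa [List.take_append_of_le_length h]

lemma gen_succs {A : List ℕ → Set ℕ} {t : List ℕ} (h : Gen A t) : succs {t | Gen A t} t = A t := by
  ext n
  simp [succs, gen_snoc, h]

lemma nil_mem_of_isTree {P : Set (List ℕ)} (hP : IsTree P) : [] ∈ P := by
  obtain ⟨s, hs⟩ := hP.1
  simpa using hP.2 s hs 0

lemma gen_subset {A : List ℕ → Set ℕ} {P : Set (List ℕ)} (hP : IsTree P)
    (hA : ∀ t ∈ P, A t ⊆ succs P t) : {t | Gen A t} ⊆ P := by
  intro t ht
  replace ht : Gen A t := ht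
  induction ht with
  | nil => exact nil_mem_of_isTree hP
  | snoc t n h1 h2 ih => exact hA t ih h2

lemma pre_succ (x : ℕ → ℕ) (k : ℕ) :
    (List.ofFn fun i : Fin (k+1) => x i) = (List.ofFn fun i : Fin k => x i) ++ [x k] := by
  rw [List.ofFn_succ_last]
  simp

open Classical in
noncomputable def cnt (big : List ℕ → Prop) (t : List ℕ) : ℕ :=
  Nat.count (fun k => big (t.take k)) t.length

open Classical in
lemma cnt_snoc (big : List ℕ → Prop) (t : List ℕ) (n : ℕ) :
    cnt big (t ++ [n]) = cnt big t + if big t then 1 else 0 := by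
  unfold cnt
  rw [List.length_append, List.length_singleton, Nat.count_succ]
  have h1 : (t ++ [n]).take t.length = t := by simp
  rw [h1]
  congr 1
  rw [Nat.count_eq_card_filter_range, Nat.count_eq_card_filter_range]
  congr 1
  apply Finset.filter_congr
  intro k hk
  rw [List.take_append_of_le_length (by simp at hk; omega)]

/-- general splitting lemma -/
lemma split_gen {P : Set (List ℕ)} (hP : IsTree P) (big : List ℕ → Prop)
    (hext : ∀ s ∈ P, ∃ t ∈ P, s <+: t ∧ big t)
    (D : List ℕ → ℕ → Bool → Set ℕ)
    (hD : ∀ t ∈ P, big t → ∀ j b, D t j b ⊆ succs P t)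
    (hdis : ∀ t ∈ P, big t → ∀ i n, n ∈ D t (2*i) true → n ∉ D t (2*i) false)
    (hne : ∀ t ∈ P, big t → ∀ j b, (D t j b).Nonempty) :
    ∃ Q : (ℕ → Bool) → Set (List ℕ), (∀ f, IsTree (Q f)) ∧ (∀ f, Q f ⊆ P) ∧
      (∀ f g, f ≠ g → Disjoint (treeBody (Q f)) (treeBody (Q g))) ∧
      (∀ f, ∀ s ∈ Q f, ∃ t ∈ Q f, s <+: t ∧ big t ∧ cnt big t = cnt big s) ∧
      (∀ f, ∀ t ∈ Q f, big t → succs (Q f) t = D t (cnt big t) (f (cnt big t / 2))) ∧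
      (∀ f, ∀ t ∈ Q f, ¬ big t → (succs (Q f) t).Nonempty) := by
  classical
  let dist : List ℕ → ℕ := fun s => sInf {m | ∃ u : List ℕ, u.length = m ∧ s ++ u ∈ P ∧ big (s ++ u)}
  have hpref : ∀ s, ∃ n, s ∈ P → ¬ big s → n ∈ succs P s ∧ dist (s ++ [n]) < dist s := by
    intro s
    by_cases h : s ∈ P ∧ ¬ big s
    swap
    · exact ⟨0, fun a b => absurd ⟨a, b⟩ h⟩
    obtain ⟨hs, hb⟩ := h
    have hnon : {m | ∃ u : List ℕ, u.length = m ∧ s ++ u ∈ P ∧ big (s ++ u)}.Nonempty := by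
      obtain ⟨t, ht, ⟨u, rfl⟩, hbt⟩ := hext s hs
      exact ⟨_, u, rfl, ht, hbt⟩
    obtain ⟨u, hu1, hu2, hu3⟩ := Nat.sInf_mem hnon
    cases u with
    | nil => simp at hu3; exact absurd hu3 hb
    | cons n u =>
      refine ⟨n, fun _ _ => ⟨?_, ?_⟩⟩
      · have := hP.2 _ hu2 (s.length + 1)
        rw [List.take_length_add_append] at this
        simpa [succs] using this
      · have : dist (s ++ [n]) ≤ u.length := Nat.sInf_le ⟨u, rfl, by simpa using hu2, by simpa using hu3⟩
        have h2 : (n :: u).length = dist s := hu1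
        simp at h2
        omega
  choose pref hpref using hpref
  let A : (ℕ → Bool) → List ℕ → Set ℕ := fun f t =>
    if big t then D t (cnt big t) (f (cnt big t / 2)) else {pref t}
  have hAbig : ∀ f t, big t → A f t = D t (cnt big t) (f (cnt big t / 2)) := fun f t h => if_pos h
  have hAn : ∀ f t, ¬ big t → A f t = {pref t} := fun f t h => if_neg h
  have hsub : ∀ f, {t | Gen (A f) t} ⊆ P := by
    intro f
    apply gen_subset hP
    intro t ht
    by_cases hb : big t
    · rw [hAbig f t hb]; exact hD t ht hb _ _
    · rw [hAn f t hb]; simpa using (hpref t ht hb).1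
  refine ⟨fun f => {t | Gen (A f) t}, fun f => gen_isTree _, hsub, ?_, ?_, ?_, ?_⟩
  · intro f g hfg
    rw [Set.disjoint_left]
    intro x hxf hxg
    apply hfg
    let p : ℕ → List ℕ := fun k => List.ofFn fun i : Fin k => x i
    have hpS : ∀ k, p (k+1) = p k ++ [x k] := fun k => pre_succ x k
    have hf : ∀ k, Gen (A f) (p k) := hxf
    have hg : ∀ k, Gen (A g) (p k) := hxg
    have hfA : ∀ k, x k ∈ A f (p k) := fun k => by
      have := hf (k+1); rw [hpS, gen_snoc] at this; exact this.2
    have hgA : ∀ k, x k ∈ A g (p k) := fun k => by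
      have := hg (k+1); rw [hpS, gen_snoc] at this; exact this.2
    have reach : ∀ m k, dist (p k) = m → ∃ k', big (p k') ∧ cnt big (p k') = cnt big (p k) := by
      intro m
      induction m using Nat.strong_induction_on with
      | _ m ih =>
        intro k hk
        by_cases hb : big (p k)
        · exact ⟨k, hb, rfl⟩
        have h1 := hfA k
        rw [hAn f _ hb] at h1
        have h1 : x k = pref (p k) := h1
        have h2 := (hpref (p k) (hsub f (hf k)) hb).2
        rw [← h1, ← hpS] at h2
        obtain ⟨k', hk1, hk2⟩ := ih _ (hk ▸ h2) (k+1) rfl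
        refine ⟨k', hk1, hk2.trans ?_⟩
        rw [hpS, cnt_snoc, if_neg hb, add_zero]
    have all : ∀ j, ∃ k, big (p k) ∧ cnt big (p k) = j := by
      intro j
      induction j with
      | zero =>
        obtain ⟨k, h1, h2⟩ := reach _ 0 rfl
        refine ⟨k, h1, h2.trans ?_⟩
        simp [cnt, p]
      | succ j ih =>
        obtain ⟨k, h1, h2⟩ := ih
        obtain ⟨k', h3, h4⟩ := reach _ (k+1) rfl
        refine ⟨k', h3, h4.trans ?_⟩
        rw [hpS, cnt_snoc, if_pos h1, h2]
    funext i
    obtain ⟨k, hb, hc⟩ := all (2*i)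
    have h1 := hfA k
    have h2 := hgA k
    rw [hAbig _ _ hb, hc] at h1 h2
    have hi : 2 * i / 2 = i := by omega
    rw [hi] at h1 h2
    have hd := hdis _ (hsub f (hf k)) hb i (x k)
    cases hfi : f i <;> cases hgi : g i <;> rw [hfi] at h1 <;> rw [hgi] at h2
    · exact absurd h1 (hd h2)
    · exact absurd h2 (hd h1)
  · intro f
    have : ∀ m s, dist s = m → Gen (A f) s → ∃ t, Gen (A f) t ∧ s <+: t ∧ big t ∧ cnt big t = cnt big s := by
      intro m
      induction m using Nat.strong_induction_on with
      | _ m ih =>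
        intro s hm hs
        by_cases hb : big s
        · exact ⟨s, hs, List.prefix_rfl, hb, rfl⟩
        have h2 := (hpref s (hsub f hs) hb).2
        obtain ⟨t, h3, h4, h5, h6⟩ := ih _ (hm ▸ h2) (s ++ [pref s]) rfl
          (Gen.snoc _ _ hs (by rw [hAn f s hb]; rfl))
        refine ⟨t, h3, (List.prefix_append _ _).trans h4, h5, h6.trans ?_⟩
        rw [cnt_snoc, if_neg hb, add_zero]
    intro s hs
    exact this _ s rfl hs
  · intro f t ht hb
    rw [gen_succs ht, hAbig f t hb]
  · intro f t ht hb
    rw [gen_succs ht, hAn f t hb]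
    simp

def Splits (𝕋 : Set (Set (List ℕ))) : Prop :=
  ∀ P ∈ 𝕋, ∃ Q : (ℕ → Bool) → Set (List ℕ), (∀ f, Q f ∈ 𝕋 ∧ Q f ⊆ P) ∧
    ∀ f g, f ≠ g → Disjoint (treeBody (Q f)) (treeBody (Q g))

lemma splits_sacks : Splits {T | IsSacksTree T} := by
  rintro P ⟨hP, hS⟩
  have : ∀ t, ∃ a b, (succs P t).Nontrivial → a ∈ succs P t ∧ b ∈ succs P t ∧ a ≠ b := by
    intro t
    by_cases h : (succs P t).Nontrivial
    · obtain ⟨a, ha, b, hb, hab⟩ := h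
      exact ⟨a, b, fun _ => ⟨ha, hb, hab⟩⟩
    · exact ⟨0, 0, fun h' => absurd h' h⟩
  choose a b hab using this
  let D : List ℕ → ℕ → Bool → Set ℕ := fun t j c =>
    if j % 2 = 1 then succs P t else {if c then a t else b t}
  obtain ⟨Q, hQ1, hQ2, hQ3, hQ4, hQ5, -⟩ := split_gen hP (fun t => (succs P t).Nontrivial) hS D
    (by
      intro t ht hb j c
      obtain ⟨h1, h2, -⟩ := hab t hb
      by_cases hj : j % 2 = 1
      · simp [D, hj]
      · cases c <;> simp [D, hj, h1, h2])
    (by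
      intro t ht hb i n h1 h2
      obtain ⟨-, -, h3⟩ := hab t hb
      simp [D] at h1 h2
      exact h3 (h1.symm.trans h2))
    (by
      intro t ht hb j c
      by_cases hj : j % 2 = 1
      · simpa [D, hj] using hb.nonempty
      · simp [D, hj])
  refine ⟨Q, fun f => ⟨⟨hQ1 f, ?_⟩, hQ2 f⟩, hQ3⟩
  have odd : ∀ t ∈ Q f, (succs P t).Nontrivial → cnt (fun t => (succs P t).Nontrivial) t % 2 = 1 →
      (succs (Q f) t).Nontrivial := by
    intro t ht hb hc
    rw [hQ5 f t ht hb]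
    simp only [D, if_pos hc]
    exact hb
  intro s hs
  obtain ⟨t, ht, hst, hb, -⟩ := hQ4 f s hs
  by_cases hc : cnt (fun t => (succs P t).Nontrivial) t % 2 = 1
  · exact ⟨t, ht, hst, odd t ht hb hc⟩
  · have h1 := hQ5 f t ht hb
    simp only [D, if_neg hc] at h1
    obtain ⟨n, hn⟩ : (succs (Q f) t).Nonempty := by rw [h1]; simp
    obtain ⟨t', ht', hst', hb', hc'⟩ := hQ4 f (t ++ [n]) hn
    refine ⟨t', ht', hst.trans ((List.prefix_append _ _).trans hst'), odd t' ht' hb' ?_⟩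
    rw [hc', cnt_snoc, if_pos hb]
    omega

lemma exists_halves (X : Set ℕ) : ∃ c : Bool → Set ℕ, X.Infinite →
    (∀ b, c b ⊆ X ∧ (c b).Infinite) ∧ Disjoint (c true) (c false) := by
  by_cases hX : X.Infinite
  swap
  · exact ⟨fun _ => ∅, fun h => absurd h hX⟩
  haveI := hX.to_subtype
  let e : ℕ ↪ X := Infinite.natEmbedding X
  refine ⟨fun b => Set.range fun k => (e (2*k + if b then 1 else 0) : ℕ), fun _ => ⟨fun b => ⟨?_, ?_⟩, ?_⟩⟩
  · rintro _ ⟨k, rfl⟩; exact (e _).2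
  · apply Set.infinite_range_of_injective
    intro i j hij
    have := e.injective (Subtype.ext hij)
    omega
  · rw [Set.disjoint_left]
    rintro _ ⟨i, rfl⟩ ⟨j, hj⟩
    have := e.injective (Subtype.ext hj)
    simp at this
    omega

lemma split_inf {P : Set (List ℕ)} (hP : IsTree P) 
    (hext : ∀ s ∈ P, ∃ t ∈ P, s <+: t ∧ (succs P t).Infinite) :
    ∃ Q : (ℕ → Bool) → Set (List ℕ), (∀ f, IsTree (Q f)) ∧ (∀ f, Q f ⊆ P) ∧
      (∀ f g, f ≠ g → Disjoint (treeBody (Q f)) (treeBody (Q g))) ∧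
      (∀ f, ∀ s ∈ Q f, ∃ t ∈ Q f, s <+: t ∧ (succs P t).Infinite) ∧
      (∀ f, ∀ t ∈ Q f, (succs P t).Infinite → (succs (Q f) t).Infinite) ∧
      (∀ f, ∀ t ∈ Q f, ¬ (succs P t).Infinite → (succs (Q f) t).Nonempty) := by
  have := fun t => exists_halves (succs P t)
  choose c hc using this
  obtain ⟨Q, hQ1, hQ2, hQ3, hQ4, hQ5, hQ6⟩ := split_gen hP (fun t => (succs P t).Infinite) hext
    (fun t _ b => c t b) (fun t ht hb j b => ((hc t hb).1 b).1)
    (fun t ht hb i n h1 h2 => Set.disjoint_left.1 (hc t hb).2 h1 h2)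
    (fun t ht hb j b => ((hc t hb).1 b).2.nonempty)
  refine ⟨Q, hQ1, hQ2, hQ3, ?_, ?_, hQ6⟩
  · intro f s hs
    obtain ⟨t, h1, h2, h3, -⟩ := hQ4 f s hs
    exact ⟨t, h1, h2, h3⟩
  · intro f t ht hb
    rw [hQ5 f t ht hb]
    exact ((hc t hb).1 _).2

lemma splits_miller : Splits {T | IsMillerTree T} := by
  rintro P ⟨hP, hS⟩
  obtain ⟨Q, hQ1, hQ2, hQ3, hQ4, hQ5, -⟩ := split_inf hP hS
  refine ⟨Q, fun f => ⟨⟨hQ1 f, ?_⟩, hQ2 f⟩, hQ3⟩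
  intro s hs
  obtain ⟨t, h1, h2, h3⟩ := hQ4 f s hs
  exact ⟨t, h1, h2, hQ5 f t h1 h3⟩

lemma splits_cl : Splits {T | IsCompleteLaverTree T} := by
  rintro P ⟨hP, hS⟩
  obtain ⟨Q, hQ1, hQ2, hQ3, hQ4, hQ5, -⟩ := split_inf hP fun s hs => ⟨s, hs, List.prefix_rfl, hS s hs⟩
  exact ⟨Q, fun f => ⟨⟨hQ1 f, fun t ht => hQ5 f t ht (hS t (hQ2 f ht))⟩, hQ2 f⟩, hQ3⟩

lemma splits_laver : Splits {T | IsLaverTree T} := by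
  rintro P ⟨hP, s, hs, hcomp, hS⟩
  obtain ⟨Q, hQ1, hQ2, hQ3, hQ4, hQ5, hQ6⟩ := split_inf hP (by
    intro t ht
    rcases hcomp t ht with h | h
    · exact ⟨t, ht, List.prefix_rfl, hS t ht h⟩
    · exact ⟨s, hs, h, hS s hs List.prefix_rfl⟩)
  refine ⟨Q, fun f => ⟨⟨hQ1 f, s, ?_, fun t ht => hcomp t (hQ2 f ht), 
    fun t ht hst => hQ5 f t ht (hS t (hQ2 f ht) hst)⟩, hQ2 f⟩, hQ3⟩
  have : ∀ k ≤ s.length, s.take k ∈ Q f := by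
    intro k
    induction k with
    | zero => intro _; simpa using nil_mem_of_isTree (hQ1 f)
    | succ k ih =>
      intro hk
      have ih := ih (by omega)
      obtain ⟨n, hn⟩ : (succs (Q f) (s.take k)).Nonempty := by
        by_cases hb : (succs P (s.take k)).Infinite
        · exact (hQ5 f _ ih hb).nonempty
        · exact hQ6 f _ ih hb
      have hn : s.take k ++ [n] ∈ Q f := hn
      have hlen : (s.take k ++ [n]).length = k + 1 := by simp; omega
      have : s.take (k+1) = s.take k ++ [n] := by
        rcases hcomp _ (hQ2 f hn) with h | h
        · have h2 := h.eq_of_length (by have := h.length_le; omega)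
          rw [← h2, List.take_of_length_le (by have := h.length_le; omega)]
        · rw [List.prefix_iff_eq_take] at h
          rw [hlen] at h
          exact h.symm
      rw [this]
      exact hn
  simpa using this s.length le_rfl

end Trees
section Main
open Topology Filter MeasureTheory
open scoped ENNReal Pointwise

lemma null_thick {K : Set ℝ} (hK : IsCompact K) (h0 : volume K = 0) (ε : ℝ≥0∞) (hε : 0 < ε) :
    ∃ δ : ℝ, 0 < δ ∧ volume (Metric.thickening δ K) ≤ ε := by
  have h := tendsto_measure_cthickening_of_isCompact (μ := volume) hK
  rw [h0] at h
  have h2 := h.eventually (gt_mem_nhds hε)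
  obtain ⟨r, hr, hr2⟩ := Metric.eventually_nhds_iff.1 h2
  refine ⟨r/2, by positivity, ?_⟩
  have := hr2 (y := r/2) (by rw [Real.dist_eq, sub_zero, abs_of_pos] <;> linarith)
  exact (measure_mono (Metric.thickening_subset_cthickening _ _)).trans this.le

lemma exists_comeager {F : Set ℝ} (hF : IsClosed F) (h0 : volume F = 0) :
    ∃ A : Set ℝ, IsMeagre Aᶜ ∧ volume {s : ℝ | ∃ l ∈ A, l + s ∈ F} = 0 := by
  let K : ℕ → Set ℝ := fun m => F ∩ Metric.closedBall 0 m
  have hK : ∀ m, IsCompact (K m) := fun m => (isCompact_closedBall 0 (m:ℝ)).inter_left hF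
  have hK0 : ∀ m, volume (K m) = 0 := fun m => measure_mono_null Set.inter_subset_left h0
  have h1 : ∀ n : ℕ, ∃ ε : ℕ → NNReal, (∀ i, 0 < ε i) ∧ ∑' i, (ε i : ℝ≥0∞) < (n : ℝ≥0∞)⁻¹ := fun n =>
    ENNReal.exists_pos_sum_of_countable (by simp) ℕ
  choose ε hε0 hε using h1
  have h2 : ∀ m n k, ∃ δ : ℝ, 0 < δ ∧ volume (Metric.thickening δ (K m)) ≤ ε n k := fun m n k =>
    null_thick (hK m) (hK0 m) _ (by exact_mod_cast hε0 n k)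
  choose δ hδ0 hδ using h2
  let q := TopologicalSpace.denseSeq ℝ
  let U : ℕ → ℕ → Set ℝ := fun m n => ⋃ k, Metric.ball (q k) (δ m n k)
  refine ⟨⋂ m, ⋂ n, U m n, ?_, ?_⟩
  · rw [IsMeagre, compl_compl]
    rw [countable_iInter_mem]
    intro m
    rw [countable_iInter_mem]
    intro n
    apply residual_of_dense_open
    · exact isOpen_iUnion fun k => Metric.isOpen_ball
    · apply (TopologicalSpace.denseRange_denseSeq ℝ).mono
      rintro _ ⟨k, rfl⟩
      exact Set.mem_iUnion.2 ⟨k, Metric.mem_ball_self (hδ0 m n k)⟩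
  · let V : ℕ → ℕ → Set ℝ := fun m n => ⋃ k, (fun s => s + q k) ⁻¹' (Metric.thickening (δ m n k) (K m))
    have hV : ∀ m n, volume (V m n) ≤ (n : ℝ≥0∞)⁻¹ := by
      intro m n
      refine (measure_iUnion_le _).trans (le_trans (ENNReal.tsum_le_tsum fun k => ?_) (hε n).le)
      rw [measure_preimage_add_right]
      exact hδ m n k
    have hV0 : ∀ m, volume (⋂ n, V m n) = 0 := by
      intro m
      apply le_antisymm _ zero_le
      exact ge_of_tendsto' ENNReal.tendsto_inv_nat_nhds_zero
        fun n => (measure_mono (Set.iInter_subset _ n)).trans (hV m n)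
    refine measure_mono_null ?_ (measure_iUnion_null hV0)
    rintro s ⟨l, hl, hls⟩
    obtain ⟨m, hm⟩ := exists_nat_ge (|l + s|)
    refine Set.mem_iUnion.2 ⟨m, Set.mem_iInter.2 fun n => ?_⟩
    have hl := Set.mem_iInter.1 (Set.mem_iInter.1 hl m) n
    obtain ⟨k, hk⟩ := Set.mem_iUnion.1 hl
    refine Set.mem_iUnion.2 ⟨k, ?_⟩
    show s + q k ∈ Metric.thickening _ _
    rw [Metric.mem_thickening_iff]
    refine ⟨l + s, ⟨hls, by simpa using hm⟩, ?_⟩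
    rw [Metric.mem_ball, dist_comm] at hk
    rw [add_comm l s, dist_add_left]
    exact hk

lemma meagre_of_closed_null {F : Set ℝ} (hF : IsClosed F) (h0 : volume F = 0) : IsMeagre F := by
  apply IsNowhereDense.isMeagre
  rw [hF.isNowhereDense_iff]
  exact Measure.interior_eq_empty_of_null h0

lemma card_lt (hc : Cardinal.continuum.{0}.IsRegular) {L S F : Set ℝ} (hL : IsGenLuzin L)
    (hS : IsGenSierpinski S) (hF : IsClosed F) (h0 : volume F = 0) :
    #(↑((L + S) ∩ F) : Type) < Cardinal.continuum := by
  have hle : ∀ X : Set ℝ, #X ≤ Cardinal.continuum := fun X => by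
    rw [← Cardinal.mk_real]; exact Cardinal.mk_set_le X
  -- translates
  have hLs : ∀ s : ℝ, #(↑({x | ∃ l ∈ L, l + s = x} ∩ F) : Type) < Cardinal.continuum := by
    intro s
    have hm : IsMeagre ((fun l => l + s) ⁻¹' F) := by
      apply meagre_of_closed_null (hF.preimage (by fun_prop))
      rw [measure_preimage_add_right, h0]
    refine lt_of_le_of_lt ?_ ((hL _ hm).trans_le (hle L))
    have : {x | ∃ l ∈ L, l + s = x} ∩ F ⊆ (fun l => l + s) '' (L ∩ (fun l => l + s) ⁻¹' F) := by
      rintro x ⟨⟨l, hl, rfl⟩, hx⟩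
      exact ⟨l, ⟨hl, hx⟩, rfl⟩
    exact (Cardinal.mk_le_mk_of_subset this).trans Cardinal.mk_image_le
  have hSl : ∀ l : ℝ, #(↑({x | ∃ s ∈ S, l + s = x} ∩ F) : Type) < Cardinal.continuum := by
    intro l
    have hm : volume ((fun s => l + s) ⁻¹' F) = 0 := by
      rw [measure_preimage_add, h0]
    refine lt_of_le_of_lt ?_ ((hS _ hm).trans_le (hle S))
    have : {x | ∃ s ∈ S, l + s = x} ∩ F ⊆ (fun s => l + s) '' (S ∩ (fun s => l + s) ⁻¹' F) := by
      rintro x ⟨⟨l, hl, rfl⟩, hx⟩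
      exact ⟨l, ⟨hl, hx⟩, rfl⟩
    exact (Cardinal.mk_le_mk_of_subset this).trans Cardinal.mk_image_le
  obtain ⟨A, hA, hN⟩ := exists_comeager hF h0
  have hB := (hL _ hA).trans_le (hle L)
  have hC := (hS _ hN).trans_le (hle S)
  have h1 := (Cardinal.card_biUnion_lt_iff_forall_of_isRegular hc hB
    (t := fun l _ => {x | ∃ s ∈ S, l + s = x} ∩ F)).2 fun l _ => hSl l
  have h2 := (Cardinal.card_biUnion_lt_iff_forall_of_isRegular hc hC
    (t := fun s _ => {x | ∃ l ∈ L, l + s = x} ∩ F)).2 fun s _ => hLs s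
  refine lt_of_le_of_lt ((Cardinal.mk_le_mk_of_subset ?_).trans (Cardinal.mk_union_le _ _))
    (Cardinal.add_lt_of_lt hc.aleph0_le h1 h2)
  rintro x ⟨hx, hxF⟩
  obtain ⟨l, hl, s, hs, rfl⟩ := Set.mem_add.1 hx
  by_cases hlA : l ∈ A
  · right
    simp only [Set.mem_iUnion]
    exact ⟨s, ⟨hs, l, hlA, hxF⟩, ⟨l, hl, rfl⟩, hxF⟩
  · left
    simp only [Set.mem_iUnion]
    exact ⟨l, ⟨hl, hlA⟩, ⟨s, hs, rfl⟩, hxF⟩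

lemma isClosed_treeBody (T : Set (List ℕ)) : IsClosed (treeBody T) := by
  have : treeBody T = ⋂ n : ℕ, (fun (x : ℕ → ℕ) (i : Fin n) => x i) ⁻¹' {y | List.ofFn y ∈ T} := by
    ext x; simp [treeBody]
  rw [this]
  exact isClosed_iInter fun n => (isClosed_discrete _).preimage (by fun_prop)

lemma main_ideal {h : (ℕ → ℕ) → ℝ} (hh : IsEmbedding h) (hr : Set.range h = {x : ℝ | Irrational x})
    (hc : Cardinal.continuum.{0}.IsRegular) {L S : Set ℝ} (hL : IsGenLuzin L)
    (hS : IsGenSierpinski S) {𝕋 : Set (Set (List ℕ))} (hT : Splits 𝕋) :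
    h ⁻¹' (L + S) ∈ treeIdeal 𝕋 := by
  intro P hP
  have hcl : ∀ T, h '' treeBody T = closure (h '' treeBody T) ∩ {x : ℝ | Irrational x} := by
    intro T
    have := hh.isInducing.closure_eq_preimage_closure_image (treeBody T)
    rw [(isClosed_treeBody T).closure_eq] at this
    conv_lhs => rw [this]
    rw [Set.image_preimage_eq_inter_range, hr]
  have hratc : {x : ℝ | Irrational x}ᶜ.Countable := by
    have : {x : ℝ | Irrational x}ᶜ = Set.range ((↑) : ℚ → ℝ) := by
      ext x; simp [Irrational]
    rw [this]; exact Set.countable_range _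
  have hmeas : ∀ T, MeasurableSet (h '' treeBody T) := fun T => by
    rw [hcl T]
    exact isClosed_closure.measurableSet.inter (MeasurableSet.of_compl hratc.measurableSet)
  obtain ⟨Q, hQ, hQd⟩ := hT P hP
  obtain ⟨f, hf⟩ : ∃ f, volume (h '' treeBody (Q f)) = 0 := by
    by_contra hcon
    push Not at hcon
    have := Measure.countable_meas_pos_of_disjoint_iUnion (μ := (volume : Measure ℝ))
      (As := fun f => h '' treeBody (Q f)) (fun f => hmeas _)
      (fun f g hfg => (Set.disjoint_image_iff hh.injective).2 (hQd f g hfg))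
    have h2 : {f | 0 < volume (h '' treeBody (Q f))} = Set.univ := by
      ext f; simpa using pos_iff_ne_zero.2 (hcon f)
    rw [h2, ← Cardinal.le_aleph0_iff_set_countable, Cardinal.mk_univ] at this
    have h3 : #(ℕ → Bool) = Cardinal.continuum := by simp
    rw [h3] at this
    exact absurd Cardinal.aleph0_lt_continuum (not_lt.2 this)
  have hF0 : volume (closure (h '' treeBody (Q f))) = 0 := by
    have : closure (h '' treeBody (Q f)) ⊆ h '' treeBody (Q f) ∪ {x : ℝ | Irrational x}ᶜ := by
      intro x hx
      by_cases hi : Irrational x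
      · left; rw [hcl]; exact ⟨hx, hi⟩
      · right; exact hi
    exact measure_mono_null this (measure_union_null hf (hratc.measure_zero _))
  have hcard := card_lt hc hL hS isClosed_closure hF0
  obtain ⟨R, hR, hRd⟩ := hT (Q f) (hQ f).1
  by_contra hcon
  have hne : ∀ g, ∃ x, x ∈ treeBody (R g) ∧ h x ∈ L + S := by
    intro g
    by_contra hx
    apply hcon
    refine ⟨R g, (hR g).1, (hR g).2.trans (hQ f).2, ?_⟩
    ext x
    simp only [Set.mem_inter_iff, Set.mem_preimage, Set.mem_empty_iff_false, iff_false]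
    exact fun h' => hx ⟨x, h'⟩
  choose x hx1 hx2 using hne
  have hinj : Function.Injective (fun g => (⟨h (x g), hx2 g, subset_closure
      ⟨x g, fun n => (hR g).2 (hx1 g n), rfl⟩⟩ :
      ↑((L + S) ∩ closure (h '' treeBody (Q f))))) := by
    intro g g' hgg
    by_contra hne
    have := hh.injective (congrArg Subtype.val hgg)
    exact Set.disjoint_left.1 (hRd g g' hne) (hx1 g) (this ▸ hx1 g')
  have := Cardinal.mk_le_of_injective hinj
  have h3 : #(ℕ → Bool) = Cardinal.continuum := by simp
  rw [h3] at this
  exact absurd hcard (not_lt.2 this)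

end Main

universe w
lemma reg_zero (hc : Cardinal.continuum.{w}.IsRegular) : Cardinal.continuum.{0}.IsRegular := by
  refine ⟨Cardinal.aleph0_le_continuum, ?_⟩
  have h := hc.le_cof_ord
  rw [← Cardinal.lift_continuum.{w, 0}, ← Cardinal.lift_ord, ← Ordinal.lift_cof, Cardinal.lift_le] at h
  exact h

open Pointwise in
/-- via an embedding of Baire space onto the irrationals, if 𝔠 is regular
then L + S belongs to each of s₀, m₀, l₀, cl₀. -/
theorem stmt17 :
    ∃ h : (ℕ → ℕ) → ℝ, Topology.IsEmbedding h ∧ Set.range h = {x : ℝ | Irrational x} ∧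
      (Cardinal.continuum.IsRegular →
        ∀ L S : Set ℝ, IsGenLuzin L → IsGenSierpinski S →
          h ⁻¹' (L + S) ∈ treeIdeal {T | IsSacksTree T} ∧
          h ⁻¹' (L + S) ∈ treeIdeal {T | IsMillerTree T} ∧
          h ⁻¹' (L + S) ∈ treeIdeal {T | IsLaverTree T} ∧
          h ⁻¹' (L + S) ∈ treeIdeal {T | IsCompleteLaverTree T}) := by
  obtain ⟨h, h1, h2⟩ := exists_emb
  exact ⟨h, h1, h2, fun hc L S hL hS =>
    ⟨main_ideal h1 h2 (reg_zero hc) hL hS splits_sacks, main_ideal h1 h2 (reg_zero hc) hL hS splits_miller,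
      main_ideal h1 h2 (reg_zero hc) hL hS splits_laver, main_ideal h1 h2 (reg_zero hc) hL hS splits_cl⟩⟩
end
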